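/- Let d ≥ 1 and let 1 < β_1 ≤ β_2 ≤ … ≤ β_d be real numbers, and let T be the diagonal self-map of the torus 𝕋^d acting coordinatewise as the β_i-transformation, i.e. (T(x))_i = T_{β_i}(x_i) for 1 ≤ i ≤ d. Let ψ : ℕ → (0,1] and set τ := liminf_{n→∞} (−log ψ(n))/n. Then the Hausdorff dimension of the set H_d(T,ψ) := {x = (x_1,…,x_d) ∈ 𝕋^d : ∏_{i=1}^d |T_{β_i}^n(x_i) − x_i| < ψ(n) for infinitely many n ∈ ℕ} equals d − 1 + (log β_d)/(τ + log β_d), where the fraction is interpreted as 0 when τ = ∞. -/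

import Mathlib

open Filter MeasureTheory
open scoped ENNReal

/-- The β-transformation `x ↦ βx - ⌊βx⌋` on `[0,1)`. -/
noncomputable def betaT (β : ℝ) : ℝ → ℝ := fun x => Int.fract (β * x)

/-- The usual metric on the torus `𝕋 = ℝ/ℤ`: distance from `a - b` to the nearest integer. -/
noncomputable def tdist (a b : ℝ) : ℝ := ⨅ k : ℤ, |a - b - (k : ℝ)|

/-! Both bounds rest on the monotone branches of `T_βⁿ`, whose left endpoints are the zeros of
`T_βⁿ`. Endpoints that appear at the same order `j` are at least `β⁻ʲ` apart.

*Upper bound.* Hence `T_βⁿ` has `O(βⁿ)` branches, and `{x | |T_βⁿ x - x| ≤ δ}` is covered by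
`O(βⁿ)` intervals of radius `O(δ β⁻ⁿ)`. If a product of `d` distances is less than `exp (-n T)`,
then the `i`-th factor is at most `exp (-n tᵢ)` for some `tᵢ ∈ {0, T/J, …, T}` with
`∑ tᵢ ≥ T (J - d) / J`. For each of the finitely many choices of `t`, with `L = log (max β)`, the
corresponding set is covered by `O(exp (-n ∑ tᵢ) / rᵈ)` balls of radius `r = exp (-n (∑ tᵢ + L))`,
which is smaller than the natural scale `exp (-n (tᵢ + log βᵢ))` in every coordinate. The
Hausdorff–Cantelli lemma gives the dimension `d - 1 + L / (T + L)` as `J → ∞`.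

*Lower bound.* All factors are at most `1`, so it is enough to control the coordinate with the
largest `β`. By the separation of endpoints, every interval of length `exp (-n c)` with `c < log β`
contains a full cylinder of order `n`, hence a short interval of points returning near themselves.
Iterating, one obtains a Cantor set of near-returning points, parametrized by a map `φ` on `[0, 1)`
with `|u - v| ≤ 8 |φ u - φ v| ^ s`. Applying `φ` to one coordinate of Lebesgue measure on the cube
gives a measure whose value on a set of diameter `ρ` is `O(ρ ^ (d - 1 + s))`. -/

open Set (Icc Ico Ioc MapsTo)
open scoped NNReal Topology

section BetaTransformation

variable {β : ℝ} {n : ℕ}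

lemma betaT_mem_Ico (β x : ℝ) : betaT β x ∈ Ico (0 : ℝ) 1 :=
  ⟨Int.fract_nonneg _, Int.fract_lt_one _⟩

lemma mapsTo_iterate_betaT_Ico (β : ℝ) (n : ℕ) :
    MapsTo (betaT β)^[n] (Ico (0 : ℝ) 1) (Ico (0 : ℝ) 1) :=
  MapsTo.iterate (fun x _ => betaT_mem_Ico β x) n

lemma iterate_betaT_nonneg {x : ℝ} (hx : 0 ≤ x) : 0 ≤ (betaT β)^[n] x :=
  MapsTo.iterate (s := Set.Ici 0) (fun y _ => (betaT_mem_Ico β y).1) n hx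

lemma iterate_betaT_zero (β : ℝ) (n : ℕ) : (betaT β)^[n] 0 = 0 :=
  Function.iterate_fixed (by simp [betaT]) n

lemma betaT_le_mul {x : ℝ} (hβ : 0 ≤ β) (hx : 0 ≤ x) : betaT β x ≤ β * x := by
  have hfloor : (0 : ℝ) ≤ ⌊β * x⌋ := by exact_mod_cast Int.floor_nonneg.2 (mul_nonneg hβ hx)
  have := Int.self_sub_floor (β * x)
  unfold betaT
  linarith

lemma iterate_betaT_le_pow_mul {x : ℝ} (hβ : 0 ≤ β) (hx : 0 ≤ x) :
    (betaT β)^[n] x ≤ β ^ n * x := by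
  induction n with
  | zero => simp
  | succ n ih =>
    rw [Function.iterate_succ_apply', pow_succ', mul_assoc]
    exact (betaT_le_mul hβ (iterate_betaT_nonneg hx)).trans (by gcongr)

lemma iterate_betaT_sub {x t : ℝ} (hβ : 0 < β) (hx : 0 ≤ x) (ht : 0 ≤ t)
    (h : β ^ n * t ≤ (betaT β)^[n] x) :
    (betaT β)^[n] (x - t) = (betaT β)^[n] x - β ^ n * t := by
  induction n with
  | zero => simp
  | succ n ih =>
    have hn : 0 ≤ (betaT β)^[n] x := iterate_betaT_nonneg hx
    rw [Function.iterate_succ_apply', pow_succ', mul_assoc] at h ⊢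
    have hprev : β ^ n * t ≤ (betaT β)^[n] x :=
      le_of_mul_le_mul_left (h.trans (betaT_le_mul hβ.le hn)) hβ
    rw [Function.iterate_succ_apply', ih hprev]
    have hlt := (betaT_mem_Ico β ((betaT β)^[n] x)).2
    have hpos : 0 ≤ β * (β ^ n * t) := by positivity
    have hfloor : β * (betaT β)^[n] x - ⌊β * (betaT β)^[n] x⌋ = betaT β ((betaT β)^[n] x) :=
      Int.self_sub_floor _
    refine Int.fract_eq_iff.2 ⟨sub_nonneg.2 h, by linarith, ⌊β * (betaT β)^[n] x⌋, by linarith⟩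

lemma iterate_betaT_of_pow_mul_lt_one {y : ℝ} (hβ : 1 ≤ β) (hy : 0 ≤ y) (h : β ^ n * y < 1) :
    (betaT β)^[n] y = β ^ n * y := by
  induction n with
  | zero => simp
  | succ n ih =>
    have hprev : β ^ n * y < 1 :=
      lt_of_le_of_lt (mul_le_mul_of_nonneg_right (pow_le_pow_right₀ hβ n.le_succ) hy) h
    rw [pow_succ', mul_assoc] at h ⊢
    rw [Function.iterate_succ_apply', ih hprev]
    exact Int.fract_eq_self.2 ⟨by positivity, h⟩

lemma exists_iterate_betaT_eq_zero {x : ℝ} (hβ : 0 < β) (hx : x ∈ Ico (0 : ℝ) 1) (n : ℕ) :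
    ∃ p ∈ Ico (0 : ℝ) 1, (betaT β)^[n] p = 0 ∧ (betaT β)^[n] x = β ^ n * (x - p) := by
  set y := (betaT β)^[n] x
  have hy0 : 0 ≤ y := iterate_betaT_nonneg hx.1
  have hpow : 0 < β ^ n := by positivity
  have hmul : β ^ n * (y / β ^ n) = y := mul_div_cancel₀ y hpow.ne'
  have hyx : y / β ^ n ≤ x := by
    rw [div_le_iff₀' hpow]
    exact iterate_betaT_le_pow_mul hβ.le hx.1
  have hdiv : 0 ≤ y / β ^ n := by positivity
  refine ⟨x - y / β ^ n, ⟨by linarith, by linarith [hx.2]⟩, ?_, by rw [sub_sub_cancel, hmul]⟩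
  rw [iterate_betaT_sub hβ hx.1 hdiv (by rw [hmul]), hmul, sub_self]

/-- `p` is a division point of exact order `j`: a left endpoint of a cylinder of order `j` that is
not an endpoint for any smaller order. It is encoded by the orbit of `p` reaching `0` for the first
time at time `j`. -/
def IsDivisionPoint (β : ℝ) (j : ℕ) (p : ℝ) : Prop :=
  p ∈ Ico (0 : ℝ) 1 ∧ (betaT β)^[j] p = 0 ∧ ∀ i < j, (betaT β)^[i] p ≠ 0

/-- `[q, q + β⁻ⁿ)` is a full cylinder of order `n`: `T_βⁿ` maps it affinely onto `[0, 1)`. -/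
def IsFullCylinder (β : ℝ) (n : ℕ) (q : ℝ) : Prop :=
  ∀ z ∈ Ico q (q + (β ^ n)⁻¹), (betaT β)^[n] z = β ^ n * (z - q)

lemma exists_isDivisionPoint_of_iterate_eq_zero {p : ℝ} (hp : p ∈ Ico (0 : ℝ) 1)
    (h : (betaT β)^[n] p = 0) : ∃ j ≤ n, IsDivisionPoint β j p := by
  classical
  have hex : ∃ j, (betaT β)^[j] p = 0 := ⟨n, h⟩
  exact ⟨Nat.find hex, Nat.find_min' hex h, hp, Nat.find_spec hex, fun _ => Nat.find_min hex⟩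

/- The last orbit point before reaching `0` is `m / β` with `m ≥ 1` an integer, so just to the left
of `p` there is room for a whole branch of `T_β`. -/
lemma IsDivisionPoint.isFullCylinder {j : ℕ} {p : ℝ} (hβ : 0 < β) (hp : IsDivisionPoint β j p)
    (hj : j ≠ 0) : IsFullCylinder β j (p - (β ^ j)⁻¹) := by
  obtain ⟨k, rfl⟩ := Nat.exists_eq_add_one_of_ne_zero hj
  obtain ⟨hp01, hzero, hne⟩ := hp
  intro z hz
  rw [sub_add_cancel] at hz
  set y := (betaT β)^[k] p with hy
  have hypos : 0 < y := (iterate_betaT_nonneg hp01.1).lt_of_ne' (hne k k.lt_succ_self)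
  rw [Function.iterate_succ_apply', ← hy] at hzero
  have hint : β * y = ⌊β * y⌋ := sub_eq_zero.1 ((Int.self_sub_floor (β * y)).trans hzero)
  have hone : 1 ≤ β * y := by
    rw [hint]
    exact_mod_cast Int.cast_pos.1 (hint ▸ mul_pos hβ hypos : (0 : ℝ) < ⌊β * y⌋)
  have ht : β ^ (k + 1) * (p - z) ≤ 1 := by
    rw [← le_div_iff₀' (by positivity), one_div]
    linarith [hz.1]
  have ht0 : 0 < β ^ (k + 1) * (p - z) := mul_pos (by positivity) (sub_pos.2 hz.2)
  have hprev : β ^ k * (p - z) ≤ y := by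
    refine le_of_mul_le_mul_left ?_ hβ
    rw [← mul_assoc, ← pow_succ']
    exact ht.trans hone
  have hz' : (betaT β)^[k] z = y - β ^ k * (p - z) := by
    simpa only [sub_sub_cancel] using
      iterate_betaT_sub hβ hp01.1 (sub_nonneg.2 hz.2.le) hprev
  have hgoal : β ^ (k + 1) * (z - (p - (β ^ (k + 1))⁻¹)) = 1 - β ^ (k + 1) * (p - z) := by
    field_simp
    ring
  rw [Function.iterate_succ_apply', hz', hgoal]
  refine Int.fract_eq_iff.2 ⟨by linarith, by linarith, ⌊β * y⌋ - 1, ?_⟩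
  push_cast
  rw [← hint]
  ring

lemma IsFullCylinder.mono {m : ℕ} {q : ℝ} (hβ : 1 ≤ β) (hmn : m ≤ n)
    (hq : IsFullCylinder β m q) : IsFullCylinder β n q := by
  intro z hz
  have hinv : (β ^ n)⁻¹ ≤ (β ^ m)⁻¹ := by gcongr
  obtain ⟨l, rfl⟩ := Nat.exists_eq_add_of_le' hmn
  have hpow : β ^ l * (β ^ m * (z - q)) = β ^ (l + m) * (z - q) := by rw [pow_add]; ring
  rw [Function.iterate_add_apply, hq z ⟨hz.1, by linarith [hz.2]⟩, ← hpow]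
  refine iterate_betaT_of_pow_mul_lt_one hβ
    (mul_nonneg (by positivity) (sub_nonneg.2 hz.1)) ?_
  rw [hpow, ← lt_div_iff₀' (by positivity), one_div]
  linarith [hz.2]

lemma IsDivisionPoint.inv_pow_le_sub {j : ℕ} {p q : ℝ} (hβ : 0 < β) (hp : IsDivisionPoint β j p)
    (hq : IsDivisionPoint β j q) (hqp : q < p) : (β ^ j)⁻¹ ≤ p - q := by
  rcases eq_or_ne j 0 with rfl | hj
  · have hp0 : p = 0 := hp.2.1
    have hq0 : q = 0 := hq.2.1
    exact absurd hqp (by rw [hp0, hq0]; exact lt_irrefl 0)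
  · by_contra! hlt
    have hqmem : q ∈ Ico (p - (β ^ j)⁻¹) (p - (β ^ j)⁻¹ + (β ^ j)⁻¹) :=
      ⟨by linarith, by linarith⟩
    have hmul := hp.isFullCylinder hβ hj q hqmem
    rw [hq.2.1, eq_comm, mul_eq_zero, or_iff_right (by positivity)] at hmul
    linarith

end BetaTransformation

section TorusDistance

lemma tdist_eq_abs_sub_round (a b : ℝ) : tdist a b = |a - b - round (a - b)| :=
  le_antisymm (ciInf_le ⟨0, Set.forall_mem_range.2 fun _ => abs_nonneg _⟩ _)
    (le_ciInf fun k => round_le (a - b) k)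

lemma tdist_nonneg (a b : ℝ) : 0 ≤ tdist a b := by
  rw [tdist_eq_abs_sub_round]
  exact abs_nonneg _

lemma tdist_le_abs_sub (a b : ℝ) : tdist a b ≤ |a - b| := by
  rw [tdist_eq_abs_sub_round]
  simpa using round_le (a - b) 0

lemma tdist_le_one (a b : ℝ) : tdist a b ≤ 1 := by
  rw [tdist_eq_abs_sub_round]
  linarith [abs_sub_round (a - b)]

end TorusDistance

/-- The points of `[0, 1)` which the `n`-th iterate of `T_β` brings back within torus distance `δ`
of themselves. -/
def nearReturn (β : ℝ) (n : ℕ) (δ : ℝ) : Set ℝ :=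
  {x | x ∈ Ico (0 : ℝ) 1 ∧ tdist ((betaT β)^[n] x) x ≤ δ}

section Covering

open Metric (closedBall)

lemma exists_finset_superset_of_separated {S : Set ℝ} {r : ℝ} (hr : 0 < r)
    (hS : S ⊆ Ico (0 : ℝ) 1) (hsep : ∀ p ∈ S, ∀ q ∈ S, q < p → r ≤ p - q) :
    ∃ P : Finset ℝ, S ⊆ P ∧ (P.card : ℝ) ≤ r⁻¹ + 1 := by
  have hmaps : MapsTo (fun p : ℝ => ⌊p / r⌋₊) S (Finset.range (⌊r⁻¹⌋₊ + 1) : Finset ℕ) := by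
    intro p hp
    rw [Finset.mem_coe, Finset.mem_range_succ_iff, ← one_div]
    exact Nat.floor_le_floor (by gcongr; exact (hS hp).2.le)
  have hne : ∀ p ∈ S, ∀ q ∈ S, q < p → ⌊p / r⌋₊ ≠ ⌊q / r⌋₊ := by
    intro p hp q hq hlt heq
    have hgap : 1 ≤ p / r - q / r := by
      rw [← sub_div, one_le_div hr]
      exact hsep p hp q hq hlt
    have hfloor := Nat.floor_le (div_nonneg (hS hq).1 hr.le)
    have hlt := Nat.lt_floor_add_one (p / r)
    rw [heq] at hlt
    linarith
  have hinj : Set.InjOn (fun p : ℝ => ⌊p / r⌋₊) S := by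
    intro p hp q hq heq
    rcases lt_trichotomy p q with hlt | rfl | hlt
    · exact absurd heq.symm (hne q hq p hp hlt)
    · rfl
    · exact absurd heq (hne p hp q hq hlt)
  obtain ⟨P, rfl⟩ := (Set.Finite.of_injOn hmaps hinj (Finset.finite_toSet _)).exists_finset_coe
  refine ⟨P, subset_rfl, ?_⟩
  calc (P.card : ℝ) ≤ (⌊r⁻¹⌋₊ + 1 : ℕ) := by
        exact_mod_cast (Finset.card_le_card_of_injOn _ hmaps hinj).trans_eq (Finset.card_range _)
    _ ≤ r⁻¹ + 1 := by
        push_cast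
        gcongr
        exact Nat.floor_le (by positivity)

lemma exists_finset_cover_closedBall (c : ℝ) {ρ r : ℝ} (hρ : 0 ≤ ρ) (hr : 0 < r) :
    ∃ P : Finset ℝ, closedBall c ρ ⊆ ⋃ p ∈ P, closedBall p r ∧ (P.card : ℝ) ≤ 2 * (ρ / r) + 2 := by
  refine ⟨(Finset.Icc ⌊-(ρ / r)⌋ ⌊ρ / r⌋).image fun j : ℤ => c + r * j, fun x hx => ?_, ?_⟩
  · rw [Metric.mem_closedBall, Real.dist_eq] at hx
    have habs : |(x - c) / r| ≤ ρ / r := by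
      rw [abs_div, abs_of_pos hr]
      gcongr
    refine Set.mem_biUnion (Finset.mem_image_of_mem _ (Finset.mem_Icc.2
      ⟨Int.floor_le_floor (abs_le.1 habs).1, Int.floor_le_floor (abs_le.1 habs).2⟩)) ?_
    have hfract : x - (c + r * ⌊(x - c) / r⌋) = r * Int.fract ((x - c) / r) := by
      rw [← Int.self_sub_floor]
      field_simp
      ring
    rw [Metric.mem_closedBall, Real.dist_eq, hfract, abs_mul, abs_of_pos hr, Int.abs_fract]
    exact mul_le_of_le_one_right hr.le (Int.fract_lt_one _).le
  · have hnonneg : 0 ≤ ρ / r := by positivity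
    have hcard : ((Finset.Icc ⌊-(ρ / r)⌋ ⌊ρ / r⌋).card : ℤ) = ⌊ρ / r⌋ + 1 - ⌊-(ρ / r)⌋ :=
      Int.card_Icc_of_le _ _ ((Int.floor_le_floor (by linarith)).trans (Int.le_add_one le_rfl))
    calc _ ≤ ((Finset.Icc ⌊-(ρ / r)⌋ ⌊ρ / r⌋).card : ℝ) := by exact_mod_cast Finset.card_image_le
      _ = ⌊ρ / r⌋ + 1 - ⌊-(ρ / r)⌋ := by exact_mod_cast hcard
      _ ≤ 2 * (ρ / r) + 2 := by
        linarith [Int.floor_le (ρ / r), Int.sub_one_lt_floor (-(ρ / r))]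

lemma exists_finset_setOf_iterate_betaT_eq_zero {β : ℝ} (hβ : 1 < β) (n : ℕ) :
    ∃ P : Finset ℝ, (∀ p ∈ Ico (0 : ℝ) 1, (betaT β)^[n] p = 0 → p ∈ P) ∧
      (P.card : ℝ) ≤ 2 * β / (β - 1) * β ^ n := by
  classical
  have hpos : 0 < β := by linarith
  have hlevel (j : ℕ) : ∃ P : Finset ℝ, {p | IsDivisionPoint β j p} ⊆ P ∧
      (P.card : ℝ) ≤ 2 * β ^ j := by
    obtain ⟨P, hP, hcard⟩ := exists_finset_superset_of_separated (r := (β ^ j)⁻¹) (by positivity)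
      (fun p (hp : IsDivisionPoint β j p) => hp.1)
      (fun p hp q hq hqp => IsDivisionPoint.inv_pow_le_sub hpos hp hq hqp)
    rw [inv_inv] at hcard
    exact ⟨P, hP, by linarith [one_le_pow₀ hβ.le (n := j)]⟩
  choose P hP hcard using hlevel
  refine ⟨(Finset.range (n + 1)).biUnion P, fun p hp hzero => ?_, ?_⟩
  · obtain ⟨j, hjn, hj⟩ := exists_isDivisionPoint_of_iterate_eq_zero hp hzero
    exact Finset.mem_biUnion.2 ⟨j, Finset.mem_range_succ_iff.2 hjn, hP j hj⟩
  · have hβ' : 0 < β - 1 := by linarith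
    calc (((Finset.range (n + 1)).biUnion P).card : ℝ)
        ≤ ∑ j ∈ Finset.range (n + 1), ((P j).card : ℝ) := by exact_mod_cast Finset.card_biUnion_le
      _ ≤ ∑ j ∈ Finset.range (n + 1), 2 * β ^ j := Finset.sum_le_sum fun j _ => hcard j
      _ = 2 * ((β ^ (n + 1) - 1) / (β - 1)) := by rw [← Finset.mul_sum, geom_sum_eq hβ.ne']
      _ ≤ 2 * (β ^ (n + 1) / (β - 1)) := by
        have := div_le_div_of_nonneg_right (sub_le_self (β ^ (n + 1)) zero_le_one) hβ'.le
        linarith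
      _ = 2 * β / (β - 1) * β ^ n := by ring

/- On the branch of `T_βⁿ` with zero `p`, the map `x ↦ T_βⁿ x - x` is affine of slope `βⁿ - 1`;
`c` is the point at which that affine map takes the integer value `k` nearest to `T_βⁿ x - x`. -/
lemma exists_finset_cover_nearReturn {β : ℝ} (hβ : 1 < β) {n : ℕ} (hn : n ≠ 0) (δ : ℝ) :
    ∃ Z : Finset ℝ, nearReturn β n δ ⊆ ⋃ c ∈ Z, closedBall c (β / (β - 1) * (δ * (β ^ n)⁻¹)) ∧
      (Z.card : ℝ) ≤ 6 * β / (β - 1) * β ^ n := by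
  obtain ⟨P, hP, hcard⟩ := exists_finset_setOf_iterate_betaT_eq_zero hβ n
  have hβn : β ≤ β ^ n := le_self_pow₀ hβ.le hn
  have hslope : 0 < β ^ n - 1 := by linarith
  refine ⟨(P ×ˢ Finset.Icc (-1 : ℤ) 1).image fun q => (β ^ n * q.1 + q.2) / (β ^ n - 1),
    fun x hx => ?_, ?_⟩
  · obtain ⟨p, hp, hp0, hpx⟩ := exists_iterate_betaT_eq_zero (zero_lt_one.trans hβ) hx.1 n
    set k := round ((betaT β)^[n] x - x)
    set c := (β ^ n * p + k) / (β ^ n - 1)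
    have hT := mapsTo_iterate_betaT_Ico β n hx.1
    have hk : k ∈ Finset.Icc (-1 : ℤ) 1 := by
      have habs := abs_le.1 (abs_sub_round ((betaT β)^[n] x - x))
      have hlt : (k : ℝ) < 2 := by linarith [hT.2, hx.1.1]
      have hgt : (-2 : ℝ) < k := by linarith [hT.1, hx.1.2]
      have hlt' : k < 2 := by exact_mod_cast hlt
      have hgt' : -2 < k := by exact_mod_cast hgt
      exact Finset.mem_Icc.2 ⟨by lia, by lia⟩
    refine Set.mem_biUnion (Finset.mem_image_of_mem _ (Finset.mk_mem_product (hP p hp hp0) hk)) ?_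
    have haffine : (betaT β)^[n] x - x - k = (β ^ n - 1) * (x - c) := by
      rw [hpx, mul_sub _ x c, mul_div_cancel₀ _ hslope.ne']
      ring
    have hdist : (β ^ n - 1) * |x - c| ≤ δ := by
      rw [← abs_of_pos hslope, ← abs_mul, ← haffine, ← tdist_eq_abs_sub_round]
      exact hx.2
    have hδ : 0 ≤ δ := (tdist_nonneg _ _).trans hx.2
    rw [Metric.mem_closedBall, Real.dist_eq]
    calc |x - c| ≤ δ / (β ^ n - 1) := by rwa [le_div_iff₀' hslope]
      _ ≤ β / (β - 1) * (δ * (β ^ n)⁻¹) := by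
        rw [div_eq_mul_inv, mul_left_comm]
        gcongr
        rw [inv_eq_one_div, ← div_eq_mul_inv, div_div,
          div_le_div_iff₀ hslope (mul_pos (sub_pos.2 hβ) (by linarith))]
        linarith
  · have hcard3 : (Finset.Icc (-1 : ℤ) 1).card = 3 := rfl
    calc _ ≤ ((P ×ˢ Finset.Icc (-1 : ℤ) 1).card : ℝ) := by exact_mod_cast Finset.card_image_le
      _ = P.card * 3 := by rw [Finset.card_product, hcard3, Nat.cast_mul, Nat.cast_ofNat]
      _ ≤ 2 * β / (β - 1) * β ^ n * 3 := by gcongr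
      _ = 6 * β / (β - 1) * β ^ n := by ring

lemma exists_cover_nearReturn_card_le {β : ℝ} (hβ : 1 < β) :
    ∃ C : ℝ, ∀ n : ℕ, n ≠ 0 → ∀ δ r : ℝ, 0 < r → r ≤ δ * (β ^ n)⁻¹ →
      ∃ P : Finset ℝ, nearReturn β n δ ⊆ ⋃ c ∈ P, closedBall c r ∧
        (P.card : ℝ) ≤ C * (δ / r) := by
  classical
  have hβ' : 0 < β - 1 := by linarith
  set K := β / (β - 1)
  have : 0 < K := by positivity
  refine ⟨6 * K * (2 * K + 2), fun n hn δ r hr hrδ => ?_⟩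
  have : 0 < β ^ n := by positivity
  obtain ⟨Z, hZ, hZcard⟩ := exists_finset_cover_nearReturn hβ hn δ
  have hρ : 0 < δ * (β ^ n)⁻¹ := hr.trans_le hrδ
  choose Q hQ hQcard using fun c : ℝ => exists_finset_cover_closedBall c (by positivity) hr
    (ρ := K * (δ * (β ^ n)⁻¹))
  refine ⟨Z.biUnion Q, fun x hx => ?_, ?_⟩
  · obtain ⟨c, hc, hxc⟩ := Set.mem_iUnion₂.1 (hZ hx)
    obtain ⟨q, hq, hxq⟩ := Set.mem_iUnion₂.1 (hQ c hxc)
    exact Set.mem_biUnion (Finset.mem_biUnion.2 ⟨c, hc, hq⟩) hxq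
  · have hone : 1 ≤ δ * (β ^ n)⁻¹ / r := (one_le_div hr).2 hrδ
    have hball : 2 * (K * (δ * (β ^ n)⁻¹) / r) + 2 ≤ (2 * K + 2) * (δ * (β ^ n)⁻¹ / r) := by
      rw [mul_div_assoc]
      linarith
    calc ((Z.biUnion Q).card : ℝ) ≤ ∑ c ∈ Z, ((Q c).card : ℝ) := by
          exact_mod_cast Finset.card_biUnion_le
      _ ≤ Z.card * ((2 * K + 2) * (δ * (β ^ n)⁻¹ / r)) := by
        rw [← nsmul_eq_mul]
        exact Finset.sum_le_card_nsmul _ _ _ fun c _ => (hQcard c).trans hball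
      _ ≤ 6 * β / (β - 1) * β ^ n * ((2 * K + 2) * (δ * (β ^ n)⁻¹ / r)) := by gcongr
      _ = 6 * K * (2 * K + 2) * (δ / r) := by
        simp only [K]
        field_simp

lemma exists_cover_pi_nearReturn_card_le {ι : Type*} [Fintype ι] {β : ι → ℝ}
    (hβ : ∀ i, 1 < β i) :
    ∃ C : ℝ, ∀ n : ℕ, n ≠ 0 → ∀ (δ : ι → ℝ) (r : ℝ), 0 < r →
      (∀ i, r ≤ δ i * (β i ^ n)⁻¹) →
      ∃ P : Finset (ι → ℝ), (Set.univ.pi fun i => nearReturn (β i) n (δ i)) ⊆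
        ⋃ c ∈ P, closedBall c r ∧ (P.card : ℝ) ≤ C * ((∏ i, δ i) / r ^ Fintype.card ι) := by
  classical
  choose C hcover using fun i => exists_cover_nearReturn_card_le (hβ i)
  refine ⟨∏ i, C i, fun n hn δ r hr hrδ => ?_⟩
  choose P hP hcard using fun i => hcover i n hn (δ i) r hr (hrδ i)
  refine ⟨Fintype.piFinset P, fun x hx => ?_, ?_⟩
  · choose c hc hxc using fun i => Set.mem_iUnion₂.1 (hP i (hx i trivial))
    exact Set.mem_biUnion (Fintype.mem_piFinset.2 hc) ((dist_pi_le_iff hr.le).2 hxc)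
  · calc ((Fintype.piFinset P).card : ℝ) = ∏ i, ((P i).card : ℝ) := by
          rw [Fintype.card_piFinset, Nat.cast_prod]
      _ ≤ ∏ i, C i * (δ i / r) := Finset.prod_le_prod (fun _ _ => by positivity) fun i _ => hcard i
      _ = (∏ i, C i) * ((∏ i, δ i) / r ^ Fintype.card ι) := by
        rw [Finset.prod_mul_distrib, Finset.prod_div_distrib, Finset.prod_const, Finset.card_univ]

end Covering

section HausdorffCantelli

open Metric (ediam closedEBall)

variable {X : Type*} [EMetricSpace X]

lemma mkMetric'_pre_biUnion_closedEBall_le (P : Finset X) {r δ : ℝ≥0∞} (hr : 2 * r ≤ δ) {s : ℝ}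
    (hs : 0 ≤ s) :
    OuterMeasure.mkMetric'.pre (fun A : Set X => ediam A ^ s) δ (⋃ c ∈ P, closedEBall c r) ≤
      P.card * (2 * r) ^ s :=
  calc _ ≤ ∑ c ∈ P, OuterMeasure.mkMetric'.pre (fun A : Set X => ediam A ^ s) δ (closedEBall c r) :=
        measure_biUnion_finset_le P _
    _ ≤ ∑ _c ∈ P, (2 * r) ^ s := Finset.sum_le_sum fun c _ =>
        (OuterMeasure.mkMetric'.pre_le (Metric.ediam_closedEBall_le.trans hr)).trans
          (ENNReal.rpow_le_rpow Metric.ediam_closedEBall_le hs)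
    _ = P.card * (2 * r) ^ s := by rw [Finset.sum_const, nsmul_eq_mul]

/- The Borel–Cantelli lemma is applied to the outer measures whose supremum is the `s`-dimensional
Hausdorff measure. -/
theorem dimH_setOf_frequently_mem_le {E : ℕ → Set X} {r a : ℕ → ℝ≥0∞} {s : ℝ≥0}
    (hr : Tendsto r atTop (𝓝 0)) (ha : ∑' n, a n ≠ ∞)
    (hE : ∀ᶠ n in atTop, ∃ P : Finset X, E n ⊆ ⋃ c ∈ P, closedEBall c (r n) ∧
      P.card * (2 * r n) ^ (s : ℝ) ≤ a n) :
    dimH {x | ∃ᶠ n in atTop, x ∈ E n} ≤ s := by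
  borelize X
  have hpre : ∀ δ > 0, OuterMeasure.mkMetric'.pre (fun A : Set X => ediam A ^ (s : ℝ)) δ
      {x | ∃ᶠ n in atTop, x ∈ E n} = 0 := by
    intro δ hδ
    have hsmall : ∀ᶠ n in atTop, 2 * r n ≤ δ := by
      have : Tendsto (fun n => 2 * r n) atTop (𝓝 0) := by
        simpa only [mul_zero] using ENNReal.Tendsto.const_mul hr (Or.inr ENNReal.ofNat_ne_top)
      exact this.eventually_le_const hδ
    obtain ⟨N, hN⟩ := eventually_atTop.1 (hsmall.and hE)
    set μ := OuterMeasure.mkMetric'.pre (fun A : Set X => ediam A ^ (s : ℝ)) δ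
    have hle (n : ℕ) : μ (E (n + N)) ≤ a (n + N) := by
      obtain ⟨hδn, P, hcover, hcard⟩ := hN (n + N) (Nat.le_add_left N n)
      exact (measure_mono hcover).trans
        ((mkMetric'_pre_biUnion_closedEBall_le P hδn s.coe_nonneg).trans hcard)
    have hsum : ∑' n, μ (E (n + N)) ≠ ∞ :=
      ne_top_of_le_ne_top ha ((ENNReal.tsum_le_tsum hle).trans
        (ENNReal.tsum_comp_le_tsum_of_injective (add_left_injective N) a))
    have hshift : {x | ∃ᶠ n in atTop, x ∈ E n} = {x | ∃ᶠ n in atTop, x ∈ E (n + N)} := by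
      ext x
      change (∃ᶠ n in atTop, x ∈ E n) ↔ ∃ᶠ n in atTop, x ∈ E (n + N)
      conv_lhs => rw [← map_add_atTop_eq_nat N, frequently_map]
    rw [hshift]
    exact measure_setOfPred_frequently_eq_zero hsum
  refine dimH_le_of_hausdorffMeasure_ne_top (ne_of_eq_of_ne ?_ ENNReal.zero_ne_top)
  rw [Measure.hausdorffMeasure, ← OuterMeasure.coe_mkMetric, OuterMeasure.mkMetric,
    OuterMeasure.mkMetric']
  simp only [OuterMeasure.iSup_apply, ENNReal.iSup_eq_zero]
  exact hpre

end HausdorffCantelli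

/-- The set `H_d(T, ψ)` of the multiplicative modified shrinking target problem, with the
coordinates of the torus indexed by an arbitrary finite type. -/
def multShrinkingTarget {ι : Type*} [Fintype ι] (β : ι → ℝ) (ψ : ℕ → ℝ) : Set (ι → ℝ) :=
  {x | (∀ i, x i ∈ Ico (0 : ℝ) 1) ∧
    ∃ᶠ n in atTop, (∏ i, tdist ((betaT (β i))^[n] (x i)) (x i)) < ψ n}

/-- The exponential decay rate `τ = liminf (-log ψ(n)) / n`, where negative values of the quotient
count as `0`. -/
noncomputable def decayRate (ψ : ℕ → ℝ) : ℝ≥0∞ :=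
  liminf (fun n : ℕ => ENNReal.ofReal (-Real.log (ψ n) / n)) atTop

lemma ofReal_neg_log_div_le_iff {p : ℝ} (hp : 0 < p) {n : ℕ} (hn : n ≠ 0) (T : ℝ≥0) :
    ENNReal.ofReal (-Real.log p / n) ≤ T ↔ Real.exp (-(n * T)) ≤ p := by
  rw [ENNReal.ofReal_le_coe, div_le_iff₀' (by positivity), neg_le, Real.le_log_iff_exp_le hp]

lemma inv_pow_eq_exp_neg {β : ℝ} (hβ : 0 < β) (n : ℕ) :
    (β ^ n)⁻¹ = Real.exp (-(n * Real.log β)) := by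
  rw [Real.exp_neg, Real.exp_nat_mul, Real.exp_log hβ]

section UpperBound

variable {ι : Type*} [Fintype ι] {β : ι → ℝ} {ψ : ℕ → ℝ}

lemma pow_mul_exp_neg_nat_mul_eq (C T L s : ℝ) (c n : ℕ) :
    C * (Real.exp (-(n * T)) / Real.exp (-(n * (T + L))) ^ c) *
      (2 * Real.exp (-(n * (T + L)))) ^ s =
      C * 2 ^ s * Real.exp (n * (L - (s + 1 - c) * (T + L))) := by
  rw [Real.mul_rpow zero_le_two (Real.exp_nonneg _), ← Real.exp_mul, ← Real.exp_nat_mul,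
    ← Real.exp_sub, mul_mul_mul_comm, ← Real.exp_add]
  ring_nf

theorem dimH_setOf_frequently_mem_pi_nearReturn_le (hβ : ∀ i, 1 < β i) {L : ℝ} (hL0 : 0 < L)
    (hL : ∀ i, Real.log (β i) ≤ L) {t : ι → ℝ} (ht : ∀ i, 0 ≤ t i) {s : ℝ≥0}
    (hs : L < (s + 1 - Fintype.card ι) * (∑ i, t i + L)) :
    dimH {x : ι → ℝ | ∃ᶠ n : ℕ in atTop,
      x ∈ Set.univ.pi fun i => nearReturn (β i) n (Real.exp (-(n * t i)))} ≤ s := by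
  obtain ⟨C, hcover⟩ := exists_cover_pi_nearReturn_card_le hβ
  set T := ∑ i, t i
  have hT (i : ι) : t i ≤ T := Finset.single_le_sum (fun i _ => ht i) (Finset.mem_univ i)
  have hTL : 0 < T + L := add_pos_of_nonneg_of_pos (Finset.sum_nonneg fun i _ => ht i) hL0
  set r : ℕ → ℝ := fun n => Real.exp (-(n * (T + L)))
  set a : ℕ → ℝ := fun n =>
    C * 2 ^ (s : ℝ) * Real.exp (n * (L - (s + 1 - Fintype.card ι) * (T + L)))
  have hr0 (n : ℕ) : 0 ≤ r n := Real.exp_nonneg _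
  have hr : Tendsto (fun n => ENNReal.ofReal (r n)) atTop (𝓝 0) := by
    rw [← ENNReal.ofReal_zero]
    exact ENNReal.tendsto_ofReal (Real.tendsto_exp_neg_atTop_nhds_zero.comp
      (tendsto_natCast_atTop_atTop.atTop_mul_const hTL))
  have ha : Summable a := (Real.summable_exp_nat_mul_iff.2 (sub_neg.2 hs)).mul_left _
  refine dimH_setOf_frequently_mem_le hr ha.tsum_ofReal_ne_top ?_
  filter_upwards [eventually_ne_atTop 0] with n hn
  have hradius (i : ι) : r n ≤ Real.exp (-(n * t i)) * (β i ^ n)⁻¹ := by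
    rw [inv_pow_eq_exp_neg (zero_lt_one.trans (hβ i)), ← Real.exp_add, ← neg_add, ← mul_add]
    exact Real.exp_le_exp.2 (neg_le_neg (by gcongr; exacts [hT i, hL i]))
  obtain ⟨P, hP, hcard⟩ := hcover n hn _ (r n) (Real.exp_pos _) hradius
  refine ⟨P, by simpa only [Metric.closedEBall_ofReal (hr0 n)] using hP, ?_⟩
  have hvolume : ∏ i, Real.exp (-(n * t i)) = Real.exp (-(n * T)) := by
    rw [← Real.exp_sum, Finset.sum_neg_distrib, ← Finset.mul_sum]
  have hmeasure : (P.card : ℝ) * (2 * r n) ^ (s : ℝ) ≤ a n := by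
    rw [hvolume] at hcard
    exact (mul_le_mul_of_nonneg_right hcard (by positivity)).trans_eq
      (pow_mul_exp_neg_nat_mul_eq C T L s _ n)
  rw [← ENNReal.ofReal_ofNat 2, ← ENNReal.ofReal_mul zero_le_two,
    ENNReal.ofReal_rpow_of_nonneg (by positivity) s.coe_nonneg, ← ENNReal.ofReal_natCast,
    ← ENNReal.ofReal_mul (Nat.cast_nonneg _)]
  exact ENNReal.ofReal_le_ofReal hmeasure

lemma exists_exponents_of_prod_lt_pow {y : ι → ℝ} {x : ℝ} (hx0 : 0 ≤ x) (hx1 : x ≤ 1)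
    (hy : ∀ i, y i ≤ 1) {J : ℕ} (hprod : ∏ i, y i < x ^ J) :
    ∃ j : ι → Fin (J + 1), J ≤ ∑ i, (j i : ℕ) + Fintype.card ι ∧ ∀ i, y i ≤ x ^ (j i : ℕ) := by
  classical
  set j : ι → ℕ := fun i => Nat.findGreatest (fun k => y i ≤ x ^ k) J
  have hj (i : ι) : y i ≤ x ^ j i :=
    Nat.findGreatest_spec (P := fun k => y i ≤ x ^ k) J.zero_le (by simpa using hy i)
  refine ⟨fun i => ⟨j i, Nat.lt_succ_of_le (Nat.findGreatest_le J)⟩, ?_, hj⟩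
  by_contra! hlt
  dsimp only at hlt
  have hgreatest (i : ι) : x ^ (j i + 1) ≤ y i := by
    have hjJ : j i < J := by
      have := Finset.single_le_sum (f := j) (fun _ _ => Nat.zero_le _) (Finset.mem_univ i)
      lia
    exact (not_le.1 (Nat.findGreatest_is_greatest (P := fun k => y i ≤ x ^ k)
      (lt_add_one (j i)) hjJ)).le
  refine hprod.not_ge ?_
  calc x ^ J ≤ x ^ ∑ i, (j i + 1) := by
        refine pow_le_pow_of_le_one hx0 hx1 ?_
        rw [Finset.sum_add_distrib, Finset.sum_const, Finset.card_univ, smul_eq_mul, mul_one]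
        exact hlt.le
    _ = ∏ i, x ^ (j i + 1) := (Finset.prod_pow_eq_pow_sum _ _ _).symm
    _ ≤ ∏ i, y i := Finset.prod_le_prod (fun i _ => by positivity) fun i _ => hgreatest i

lemma multShrinkingTarget_subset_iUnion {T : ℝ} (hT : 0 ≤ T)
    (hψ : ∀ᶠ n : ℕ in atTop, ψ n ≤ Real.exp (-(n * T))) {J : ℕ} (hJ : J ≠ 0) :
    multShrinkingTarget β ψ ⊆ ⋃ j : {j : ι → Fin (J + 1) // J ≤ ∑ i, (j i : ℕ) + Fintype.card ι},
      {x | ∃ᶠ n : ℕ in atTop,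
        x ∈ Set.univ.pi fun i => nearReturn (β i) n (Real.exp (-(n * (T / J * (j.1 i : ℕ)))))} := by
  rintro x ⟨hx, hfreq⟩
  refine Set.mem_iUnion.2 (frequently_exists.1 ?_)
  refine (hfreq.and_eventually hψ).mono fun n ⟨hn, hψn⟩ => ?_
  have hpow (k : ℕ) : Real.exp (-(n * (T / J))) ^ k = Real.exp (-(n * (T / J * k))) := by
    rw [← Real.exp_nat_mul]
    ring_nf
  obtain ⟨j, hj, hle⟩ := exists_exponents_of_prod_lt_pow (Real.exp_nonneg (-(n * (T / J))))
    (Real.exp_le_one_iff.2 (neg_nonpos.2 (by positivity))) (fun i => tdist_le_one _ _)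
    (J := J) (by
      rw [hpow, div_mul_cancel₀ T (Nat.cast_ne_zero.2 hJ)]
      exact hn.trans_le hψn)
  exact ⟨⟨j, hj⟩, fun i _ => ⟨hx i, (hle i).trans_eq (hpow _)⟩⟩

lemma exists_nat_lt_mul_div_mul_sub_add {a b θ T : ℝ} (h : a < θ * T + b) (c : ℝ) :
    ∃ J : ℕ, J ≠ 0 ∧ a < θ * (T / J * (J - c)) + b := by
  have hlim : Tendsto (fun J : ℕ => θ * (T - T * c / J) + b) atTop (𝓝 (θ * (T - 0) + b)) :=
    ((tendsto_const_nhds.sub (tendsto_const_div_atTop_nhds_zero_nat _)).const_mul θ).add_const b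
  rw [sub_zero] at hlim
  obtain ⟨J, hJ, hJ0⟩ := ((hlim.eventually_const_lt h).and (eventually_ne_atTop 0)).exists
  refine ⟨J, hJ0, ?_⟩
  rwa [mul_sub, div_mul_cancel₀ T (Nat.cast_ne_zero.2 hJ0), div_mul_eq_mul_div]

theorem dimH_multShrinkingTarget_le_of_eventually_le (hβ : ∀ i, 1 < β i) {L : ℝ} (hL0 : 0 < L)
    (hL : ∀ i, Real.log (β i) ≤ L) {T : ℝ} (hT : 0 ≤ T)
    (hψ : ∀ᶠ n : ℕ in atTop, ψ n ≤ Real.exp (-(n * T))) {s : ℝ≥0}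
    (hs : L < (s + 1 - Fintype.card ι) * (T + L)) :
    dimH (multShrinkingTarget β ψ) ≤ s := by
  set θ : ℝ := s + 1 - Fintype.card ι
  have hθ : 0 ≤ θ := (pos_of_mul_pos_left (hL0.trans hs) (by positivity)).le
  rw [mul_add] at hs
  obtain ⟨J, hJ, hJs⟩ := exists_nat_lt_mul_div_mul_sub_add hs (Fintype.card ι)
  refine (dimH_mono (multShrinkingTarget_subset_iUnion hT hψ hJ)).trans ?_
  rw [dimH_iUnion]
  refine iSup_le fun ⟨j, hj⟩ => dimH_setOf_frequently_mem_pi_nearReturn_le hβ hL0 hL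
    (fun i => by positivity) ?_
  have hj' : (J : ℝ) - Fintype.card ι ≤ ∑ i, ((j i : ℕ) : ℝ) := by
    rw [sub_le_iff_le_add]
    exact_mod_cast hj
  rw [← Finset.mul_sum, mul_add]
  exact hJs.trans_le (by gcongr)

lemma exists_lt_of_div_add_lt {L θ : ℝ≥0} (hL : 0 < L) (hθ : θ ≤ 1) {τ : ℝ≥0∞}
    (h : L / (τ + L) < θ) : ∃ T : ℝ≥0, T < τ ∧ L < θ * (T + L) := by
  have hL' : (L : ℝ≥0∞) ≠ 0 := by exact_mod_cast hL.ne'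
  have : NeZero τ := by
    refine ⟨fun hτ => ?_⟩
    rw [hτ, zero_add, ENNReal.div_self hL' ENNReal.coe_ne_top] at h
    exact h.not_ge (by exact_mod_cast hθ)
  rw [ENNReal.div_lt_iff (Or.inl (by simp [hL'])) (Or.inr ENNReal.coe_ne_top)] at h
  have hcont : Continuous fun T : ℝ≥0∞ => θ * (T + L) :=
    (ENNReal.continuous_const_mul ENNReal.coe_ne_top).comp (continuous_add_const _)
  obtain ⟨T, hT, hTτ⟩ := (((hcont.tendsto τ).eventually_const_lt h).filter_mono
    nhdsWithin_le_nhds |>.and (self_mem_nhdsWithin (s := Set.Iio τ))).exists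
  lift T to ℝ≥0 using hTτ.ne_top
  exact ⟨T, hTτ, by exact_mod_cast hT⟩

theorem dimH_multShrinkingTarget_le [Nonempty ι] (hβ : ∀ i, 1 < β i) (hψ : ∀ n, 0 < ψ n)
    {L : ℝ≥0} (hL0 : 0 < L) (hL : ∀ i, Real.log (β i) ≤ L) :
    dimH (multShrinkingTarget β ψ) ≤
      (Fintype.card ι - 1 : ℕ) + (L / (decayRate ψ + L) : ℝ≥0∞) := by
  refine ENNReal.le_of_forall_pos_le_add fun ε hε _ => ?_
  obtain ⟨m, hm⟩ := Nat.exists_eq_add_one.2 (Fintype.card_pos (α := ι))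
  rw [hm, Nat.add_sub_cancel, add_assoc]
  have htop : (L / (decayRate ψ + L) : ℝ≥0∞) ≠ ∞ :=
    ENNReal.div_ne_top ENNReal.coe_ne_top (by simp [hL0.ne'])
  obtain ⟨θ, hθ⟩ : ∃ θ : ℝ≥0, (θ : ℝ≥0∞) = L / (decayRate ψ + L) + ε :=
    CanLift.prf _ (by simp [htop])
  rw [← hθ]
  rcases le_total 1 θ with h1 | h1
  · calc dimH (multShrinkingTarget β ψ) ≤ dimH (Set.univ : Set (ι → ℝ)) :=
          dimH_mono (Set.subset_univ _)
      _ = m + 1 := by rw [Real.dimH_univ_pi, hm, Nat.cast_add_one]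
      _ ≤ m + θ := by gcongr; exact_mod_cast h1
  · obtain ⟨T, hTτ, hT⟩ := exists_lt_of_div_add_lt hL0 h1 (τ := decayRate ψ)
      (hθ ▸ ENNReal.lt_add_right htop (by simpa using hε.ne'))
    have hψT : ∀ᶠ n : ℕ in atTop, ψ n ≤ Real.exp (-(n * T)) := by
      filter_upwards [eventually_lt_of_lt_liminf hTτ, eventually_ne_atTop 0] with n hn hn0
      exact (lt_of_not_ge (mt (ofReal_neg_log_div_le_iff (hψ n) hn0 T).2 hn.not_ge)).le
    have hdim := dimH_multShrinkingTarget_le_of_eventually_le hβ (NNReal.coe_pos.2 hL0) hL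
      T.coe_nonneg hψT (s := m + θ) (by
        push_cast [hm]
        rw [add_right_comm, add_sub_cancel_left]
        exact_mod_cast hT)
    exact_mod_cast hdim

end UpperBound

section FullCylinders

variable {β : ℝ} {n k : ℕ} {a q δ : ℝ}

lemma exists_isDivisionPoint_mem_Ioc {x : ℝ} (hβ : 0 < β) (hx : x ∈ Ico (0 : ℝ) 1) (n : ℕ) :
    ∃ j ≤ n, ∃ p ∈ Ioc (x - (β ^ n)⁻¹) x, IsDivisionPoint β j p := by
  obtain ⟨p, hp, hzero, hpx⟩ := exists_iterate_betaT_eq_zero hβ hx n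
  obtain ⟨j, hjn, hj⟩ := exists_isDivisionPoint_of_iterate_eq_zero hp hzero
  have hpow : 0 < β ^ n := by positivity
  have himage := mapsTo_iterate_betaT_Ico β n hx
  rw [hpx] at himage
  have hlt : x - p < (β ^ n)⁻¹ := by
    rw [← one_div]
    exact (lt_div_iff₀' hpow).2 himage.2
  have hle : 0 ≤ x - p := nonneg_of_mul_nonneg_right himage.1 hpow
  exact ⟨j, hjn, p, ⟨by linarith, by linarith⟩, hj⟩

/- Among `k + 2` consecutive windows of length `β⁻ⁿ`, each containing a division point, two would
contain division points of the same order `≤ k`, which are too far apart. -/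
lemma exists_isDivisionPoint_order_gt (hβ : 1 < β) (hk : ((k : ℝ) + 2) * (β ^ n)⁻¹ ≤ (β ^ k)⁻¹)
    (ha0 : 0 ≤ a) (ha1 : a + (β ^ k)⁻¹ < 1) :
    ∃ j, k < j ∧ j ≤ n ∧ ∃ p ∈ Ioc a (a + (β ^ k)⁻¹), IsDivisionPoint β j p := by
  have hβ0 : 0 < β := zero_lt_one.trans hβ
  set e := (β ^ n)⁻¹
  have he : 0 < e := by positivity
  have hX (i : ℕ) (hi : i < k + 2) : a + (i + 1) * e ≤ a + (β ^ k)⁻¹ := by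
    have : (i : ℝ) + 1 ≤ k + 2 := by exact_mod_cast hi
    nlinarith
  have hpoint (i : ℕ) (hi : i < k + 2) : ∃ j ≤ n, ∃ p ∈ Ioc (a + i * e) (a + (i + 1) * e),
      IsDivisionPoint β j p := by
    have hsub : a + (i + 1) * e - e = a + i * e := by ring
    rw [← hsub]
    exact exists_isDivisionPoint_mem_Ioc hβ0 ⟨by positivity, (hX i hi).trans_lt ha1⟩ n
  choose! j hjn p hp hdiv using hpoint
  by_contra! hcon
  have hjk (i : ℕ) (hi : i < k + 2) : j i ≤ k := by
    by_contra! hlt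
    refine hcon (j i) hlt (hjn i hi) (p i) ⟨?_, (hp i hi).2.trans (hX i hi)⟩ (hdiv i hi)
    exact (le_add_of_nonneg_right (by positivity)).trans_lt (hp i hi).1
  obtain ⟨i, hi, i', hi', hne, heq⟩ := Finset.exists_ne_map_eq_of_card_lt_of_maps_to
    (s := Finset.range (k + 2)) (t := Finset.range (k + 1)) (f := j) (by simp)
    fun i hi => by
      simpa only [Finset.coe_range, Set.mem_Iio, Nat.lt_succ_iff] using
        hjk i (Finset.mem_range.1 hi)
  rw [Finset.mem_range] at hi hi'
  wlog hlt : i < i' generalizing i i'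
  · exact this i' hi' i hi hne.symm heq.symm (hne.symm.lt_of_le (not_lt.1 hlt))
  have hii' : (i : ℝ) + 1 ≤ i' := by exact_mod_cast hlt
  have hpp : p i < p i' := (hp i hi).2.trans_lt (lt_of_le_of_lt (by gcongr) (hp i' hi').1)
  have hsep := IsDivisionPoint.inv_pow_le_sub hβ0 (heq ▸ hdiv i' hi') (hdiv i hi) hpp
  have hpow : (β ^ k)⁻¹ ≤ (β ^ j i)⁻¹ := by
    gcongr
    exacts [hβ.le, hjk i hi]
  have hie : 0 ≤ (i : ℝ) * e := by positivity
  linarith [(hp i hi).1, (hp i' hi').2, hX i' hi']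

lemma exists_isFullCylinder (hβ : 1 < β) (hk : ((k : ℝ) + 2) * (β ^ n)⁻¹ ≤ (β ^ k)⁻¹)
    (ha0 : 0 ≤ a) (ha1 : a + 2 * (β ^ k)⁻¹ < 1) :
    ∃ q, a ≤ q ∧ q + (β ^ n)⁻¹ ≤ a + 2 * (β ^ k)⁻¹ ∧ IsFullCylinder β n q := by
  have hβ0 : 0 < β := zero_lt_one.trans hβ
  obtain ⟨j, hkj, hjn, p, hp, hdiv⟩ :=
    exists_isDivisionPoint_order_gt hβ hk (a := a + (β ^ k)⁻¹) (by positivity) (by linarith)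
  have hkj' : (β ^ j)⁻¹ ≤ (β ^ k)⁻¹ := by gcongr; exact hβ.le
  have hjn' : (β ^ n)⁻¹ ≤ (β ^ j)⁻¹ := by gcongr; exact hβ.le
  exact ⟨p - (β ^ j)⁻¹, by linarith [hp.1], by linarith [hp.2],
    (hdiv.isFullCylinder hβ0 (Nat.ne_zero_of_lt hkj)).mono hβ.le hjn⟩

/- `T_βⁿ` has a fixed point `x₀` in the cylinder, and the required interval is the image of the
cylinder under the homothety of ratio `δ` centred at `x₀`. -/
lemma IsFullCylinder.exists_Icc_subset_nearReturn (hβ : 1 < β) (hn : n ≠ 0)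
    (hq : IsFullCylinder β n q) (hq0 : 0 ≤ q) (hq1 : q + (β ^ n)⁻¹ < 1) (hδ0 : 0 < δ)
    (hδ1 : δ < 1) :
    ∃ b, q ≤ b ∧ b + δ * (β ^ n)⁻¹ ≤ q + (β ^ n)⁻¹ ∧
      Icc b (b + δ * (β ^ n)⁻¹) ⊆ nearReturn β n δ := by
  have hpow : 0 < β ^ n - 1 := sub_pos.2 (one_lt_pow₀ hβ hn)
  have hpe : β ^ n * (β ^ n)⁻¹ = 1 := mul_inv_cancel₀ (by positivity)
  set e := (β ^ n)⁻¹
  have : 0 < e := by positivity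
  set t := q / (β ^ n - 1) with ht
  have hmt : (β ^ n - 1) * t = q := mul_div_cancel₀ q hpow.ne'
  have ht0 : 0 ≤ t := by positivity
  have hte : t < e := by
    rw [ht, div_lt_iff₀' hpow]
    linarith
  have hδt : δ * t < δ * e := by gcongr
  have hδ1t : (1 - δ) * t < (1 - δ) * e := mul_lt_mul_of_pos_left hte (sub_pos.2 hδ1)
  have hδ1t0 : 0 ≤ (1 - δ) * t := mul_nonneg (sub_pos.2 hδ1).le ht0
  refine ⟨q + (1 - δ) * t, by linarith, by linarith, fun x ⟨hbx, hxb⟩ => ?_⟩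
  have hx0 : |x - (q + t)| ≤ δ * e := by
    have : 0 ≤ δ * t := by positivity
    rw [abs_le]
    constructor <;> linarith
  refine ⟨⟨by linarith, by linarith⟩, (tdist_le_abs_sub _ _).trans ?_⟩
  have hdist : β ^ n * (x - q) - x = (β ^ n - 1) * (x - (q + t)) := by linear_combination hmt
  rw [hq x ⟨by linarith, by linarith⟩, hdist, abs_mul, abs_of_pos hpow]
  calc (β ^ n - 1) * |x - (q + t)| ≤ β ^ n * (δ * e) := by gcongr; linarith
    _ = δ := by rw [mul_left_comm, hpe, mul_one]

lemma exists_Icc_subset_nearReturn (hβ : 1 < β) (hn : n ≠ 0)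
    (hk : ((k : ℝ) + 2) * (β ^ n)⁻¹ ≤ (β ^ k)⁻¹) (hδ0 : 0 < δ) (hδ1 : δ < 1) (ha0 : 0 ≤ a)
    (ha1 : a + 2 * (β ^ k)⁻¹ < 1) :
    ∃ b, a ≤ b ∧ b + δ * (β ^ n)⁻¹ ≤ a + 2 * (β ^ k)⁻¹ ∧
      Icc b (b + δ * (β ^ n)⁻¹) ⊆ nearReturn β n δ := by
  obtain ⟨q, haq, hqa, hq⟩ := exists_isFullCylinder hβ hk ha0 ha1
  obtain ⟨b, hqb, hbq, hb⟩ := hq.exists_Icc_subset_nearReturn hβ hn (ha0.trans haq)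
    (hqa.trans_lt ha1) hδ0 hδ1
  exact ⟨b, haq.trans hqb, hbq.trans hqa, hb⟩

end FullCylinders

/-- One step of a Cantor construction: in an interval of length `ρ` one chooses `num` slots of
length `gap`, separated by gaps of the same length, and in the slot starting at `a` a child interval
of length `ρ'`, contained in `E`, starting at `child a`. The bound `1 ≤ num * ρ' ^ s` makes the mass
distributed uniformly over the children at most the `s`-th power of their length. -/
structure CantorStep (s : ℝ) (E : Set ℝ) (ρ ρ' : ℝ) where
  gap : ℝ
  num : ℕ
  child : ℝ → ℝ
  le_gap : ρ' ≤ gap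
  two_le_num : 2 ≤ num
  two_mul_gap_mul_num_le : 2 * gap * num ≤ ρ
  le_four_mul_gap_mul_num : ρ ≤ 4 * gap * num
  one_le_num_mul_rpow : 1 ≤ num * ρ' ^ s
  child_spec : ∀ a, 0 ≤ a → a + gap < 1 →
    a ≤ child a ∧ child a + ρ' ≤ a + gap ∧ Icc (child a) (child a + ρ') ⊆ E

lemma CantorStep.nonempty {s : ℝ} {E : Set ℝ} {ρ ρ' h : ℝ} (hρ' : 0 < ρ') (hρ'h : ρ' ≤ h)
    (hρ : 4 * h ≤ ρ) (hs : 4 * h ≤ ρ * ρ' ^ s)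
    (hE : ∀ a, 0 ≤ a → a + h < 1 → ∃ b, a ≤ b ∧ b + ρ' ≤ a + h ∧ Icc b (b + ρ') ⊆ E) :
    Nonempty (CantorStep s E ρ ρ') := by
  choose! child hchild using hE
  have hh : 0 < h := hρ'.trans_le hρ'h
  have htwo : 2 ≤ ρ / (2 * h) := (le_div_iff₀ (by positivity)).2 (by linarith)
  set num := ⌊ρ / (2 * h)⌋₊
  have hnum : 2 ≤ num := Nat.le_floor htwo
  have hupper : 2 * h * num ≤ ρ :=
    (le_div_iff₀' (by positivity)).1 (Nat.floor_le (zero_le_two.trans htwo))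
  have hlower : ρ ≤ 4 * h * num := by
    have hlt : ρ < 2 * h * (num + 1) := (div_lt_iff₀' (by positivity)).1 (Nat.lt_floor_add_one _)
    have : (2 : ℝ) ≤ num := by exact_mod_cast hnum
    nlinarith
  refine ⟨h, num, child, hρ'h, hnum, hupper, hlower, ?_, hchild⟩
  refine le_of_mul_le_mul_left (a := 4 * h) ?_ (by positivity)
  calc 4 * h * 1 ≤ ρ * ρ' ^ s := by rwa [mul_one]
    _ ≤ 4 * h * num * ρ' ^ s := by gcongr
    _ = 4 * h * (num * ρ' ^ s) := mul_assoc _ _ _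

/-- A Cantor construction starting from `[0, 1]`, whose intervals of generation `k + 1` have length
`len (k + 1)` and are contained in `E (time k)`. -/
structure CantorScheme (s : ℝ) (E : ℕ → Set ℝ) where
  len : ℕ → ℝ
  time : ℕ → ℕ
  len_zero : len 0 = 1
  len_pos : ∀ k, 0 < len k
  time_strictMono : StrictMono time
  step : ∀ k, CantorStep s (E (time k)) (len k) (len (k + 1))

namespace CantorScheme

variable {s : ℝ} {E : ℕ → Set ℝ}

lemma nonempty (hE : ∀ ρ : ℝ, 0 < ρ →
    ∃ᶠ n in atTop, ∃ ρ' : ℝ, 0 < ρ' ∧ Nonempty (CantorStep s (E n) ρ ρ')) :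
    Nonempty (CantorScheme s E) := by
  have hnext (σ : Set.Ioi (0 : ℝ) × ℕ) : ∃ σ' : Set.Ioi (0 : ℝ) × ℕ, σ.2 < σ'.2 ∧
      Nonempty (CantorStep s (E σ'.2) σ.1 σ'.1) := by
    obtain ⟨⟨ρ, hρ⟩, N⟩ := σ
    obtain ⟨n, hn, ρ', hρ', hstep⟩ := frequently_atTop'.1 (hE ρ hρ) N
    exact ⟨⟨⟨ρ', hρ'⟩, n⟩, hn, hstep⟩
  choose next hlt hstep using hnext
  set σ : ℕ → Set.Ioi (0 : ℝ) × ℕ := fun k => next^[k] (⟨1, Set.mem_Ioi.2 one_pos⟩, 0)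
  have hσ (k : ℕ) : σ (k + 1) = next (σ k) := Function.iterate_succ_apply' _ _ _
  refine ⟨⟨fun k => (σ k).1, fun k => (σ (k + 1)).2, rfl, fun k => (σ k).1.2, ?_, fun k => ?_⟩⟩
  · refine strictMono_nat_of_lt_succ fun k => ?_
    rw [hσ (k + 1)]
    exact hlt _
  · rw [hσ k]
    exact (hstep (σ k)).some

variable (S : CantorScheme s E) {u v : ℝ} {k : ℕ}

/-- The part of the mixed radix expansion of `u`, with radices `(S.step k).num`, that remains after
`k` digits, rescaled to `[0, 1)`. -/
noncomputable def tail (u : ℝ) : ℕ → ℝ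
  | 0 => u
  | k + 1 => Int.fract ((S.step k).num * tail u k)

/-- The digits of the mixed radix expansion of `u`. -/
noncomputable def digit (u : ℝ) (k : ℕ) : ℤ := ⌊(S.step k).num * S.tail u k⌋

/-- The left endpoint of the interval of generation `k` coded by the digits of `u`. -/
noncomputable def left (u : ℝ) : ℕ → ℝ
  | 0 => 0
  | k + 1 => (S.step k).child (left u k + 2 * (S.step k).gap * S.digit u k)

/-- The left endpoint of the slot of the interval of generation `k` coded by `u` in which its child
interval lies. -/
noncomputable def slot (u : ℝ) (k : ℕ) : ℝ := S.left u k + 2 * (S.step k).gap * S.digit u k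

/-- The point of the Cantor set coded by `u`. -/
noncomputable def limitPoint (u : ℝ) : ℝ := ⨆ k, S.left u k

/-- The number of intervals of generation `k`. -/
noncomputable def numIntervals (k : ℕ) : ℝ := ∏ j ∈ Finset.range k, ((S.step j).num : ℝ)

lemma gap_pos (k : ℕ) : 0 < (S.step k).gap := (S.len_pos (k + 1)).trans_le (S.step k).le_gap

lemma two_le_num (k : ℕ) : (2 : ℝ) ≤ (S.step k).num := by exact_mod_cast (S.step k).two_le_num

lemma tail_succ (u : ℝ) (k : ℕ) :
    S.tail u (k + 1) = (S.step k).num * S.tail u k - S.digit u k :=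
  (Int.self_sub_floor _).symm

lemma tail_mem_Ico (hu : u ∈ Ico (0 : ℝ) 1) : ∀ k, S.tail u k ∈ Ico (0 : ℝ) 1
  | 0 => hu
  | _ + 1 => ⟨Int.fract_nonneg _, Int.fract_lt_one _⟩

lemma abs_tail_sub_lt_one (hu : u ∈ Ico (0 : ℝ) 1) (hv : v ∈ Ico (0 : ℝ) 1) (k : ℕ) :
    |S.tail u k - S.tail v k| < 1 := by
  have hu' := S.tail_mem_Ico hu k
  have hv' := S.tail_mem_Ico hv k
  rw [abs_lt]
  constructor <;> linarith [hu'.1, hu'.2, hv'.1, hv'.2]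

lemma digit_nonneg (hu : u ∈ Ico (0 : ℝ) 1) (k : ℕ) : (0 : ℝ) ≤ S.digit u k := by
  exact_mod_cast Int.floor_nonneg.2 (mul_nonneg (Nat.cast_nonneg _) (S.tail_mem_Ico hu k).1)

lemma digit_add_one_le_num (hu : u ∈ Ico (0 : ℝ) 1) (k : ℕ) :
    (S.digit u k : ℝ) + 1 ≤ (S.step k).num := by
  have hlt : S.digit u k < (S.step k).num := by
    refine Int.floor_lt.2 ?_
    have := S.two_le_num k
    push_cast
    nlinarith [(S.tail_mem_Ico hu k).2]
  exact_mod_cast hlt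

lemma left_le_slot (hu : u ∈ Ico (0 : ℝ) 1) (k : ℕ) : S.left u k ≤ S.slot u k :=
  le_add_of_nonneg_right
    (mul_nonneg (mul_nonneg zero_le_two (S.gap_pos k).le) (S.digit_nonneg hu k))

lemma slot_add_gap_lt (hu : u ∈ Ico (0 : ℝ) 1) (k : ℕ) :
    S.slot u k + (S.step k).gap < S.left u k + S.len k := by
  have hgap := S.gap_pos k
  have hmul : 2 * (S.step k).gap * (S.digit u k + 1) ≤ 2 * (S.step k).gap * (S.step k).num := by
    gcongr
    exact S.digit_add_one_le_num hu k
  have := (S.step k).two_mul_gap_mul_num_le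
  unfold slot
  linarith

lemma left_nonneg_and_add_len_le (hu : u ∈ Ico (0 : ℝ) 1) (k : ℕ) :
    0 ≤ S.left u k ∧ S.left u k + S.len k ≤ 1 := by
  induction k with
  | zero => simp [left, S.len_zero]
  | succ k ih =>
    have hslot0 := ih.1.trans (S.left_le_slot hu k)
    have hslot1 := (S.slot_add_gap_lt hu k).trans_le ih.2
    obtain ⟨hle, hadd, -⟩ := (S.step k).child_spec _ hslot0 hslot1
    exact ⟨hslot0.trans hle, hadd.trans hslot1.le⟩

lemma left_succ_spec (hu : u ∈ Ico (0 : ℝ) 1) (k : ℕ) :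
    S.slot u k ≤ S.left u (k + 1) ∧
      S.left u (k + 1) + S.len (k + 1) ≤ S.slot u k + (S.step k).gap ∧
      Icc (S.left u (k + 1)) (S.left u (k + 1) + S.len (k + 1)) ⊆ E (S.time k) := by
  obtain ⟨hleft, hright⟩ := S.left_nonneg_and_add_len_le hu k
  exact (S.step k).child_spec _ (hleft.trans (S.left_le_slot hu k))
    ((S.slot_add_gap_lt hu k).trans_le hright)

lemma limitPoint_mem_Icc (hu : u ∈ Ico (0 : ℝ) 1) (k : ℕ) :
    S.limitPoint u ∈ Icc (S.left u k) (S.left u k + S.len k) := by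
  have hanti : Antitone fun j => Icc (S.left u j) (S.left u j + S.len j) := by
    refine antitone_nat_of_succ_le fun j => ?_
    obtain ⟨hleft, hright, -⟩ := S.left_succ_spec hu j
    exact Set.Icc_subset_Icc ((S.left_le_slot hu j).trans hleft)
      (hright.trans (S.slot_add_gap_lt hu j).le)
  exact Set.mem_iInter.1 (ciSup_mem_iInter_Icc_of_antitone_Icc hanti fun j =>
    le_add_of_nonneg_right (S.len_pos j).le) k

lemma frequently_limitPoint_mem (hu : u ∈ Ico (0 : ℝ) 1) : ∃ᶠ n in atTop, S.limitPoint u ∈ E n :=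
  S.time_strictMono.tendsto_atTop.frequently <| Frequently.of_forall fun k =>
    (S.left_succ_spec hu k).2.2 (S.limitPoint_mem_Icc hu (k + 1))

lemma numIntervals_succ (k : ℕ) : S.numIntervals (k + 1) = S.numIntervals k * (S.step k).num :=
  Finset.prod_range_succ _ _

lemma two_pow_le_numIntervals (k : ℕ) : 2 ^ k ≤ S.numIntervals k := by
  simpa only [Finset.prod_const, Finset.card_range, numIntervals] using
    Finset.prod_le_prod (s := Finset.range k) (fun _ _ => zero_le_two) fun j _ => S.two_le_num j

lemma one_le_numIntervals (k : ℕ) : 1 ≤ S.numIntervals k :=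
  (one_le_pow₀ one_le_two).trans (S.two_pow_le_numIntervals k)

lemma one_le_numIntervals_mul_len_rpow : ∀ k, 1 ≤ S.numIntervals k * S.len k ^ s
  | 0 => by simp [numIntervals, S.len_zero]
  | k + 1 => by
    rw [numIntervals_succ, mul_assoc]
    exact one_le_mul_of_one_le_of_one_le (S.one_le_numIntervals k) (S.step k).one_le_num_mul_rpow

lemma left_congr (h : ∀ j < k, S.digit u j = S.digit v j) : S.left u k = S.left v k := by
  induction k with
  | zero => rfl
  | succ k ih => rw [left, left, h k k.lt_succ_self, ih fun j hj => h j (hj.trans k.lt_succ_self)]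

lemma tail_sub_tail (h : ∀ j < k, S.digit u j = S.digit v j) :
    S.tail u k - S.tail v k = S.numIntervals k * (u - v) := by
  induction k with
  | zero => simp [numIntervals, tail]
  | succ k ih =>
    rw [tail_succ, tail_succ, h k k.lt_succ_self, numIntervals_succ, sub_sub_sub_cancel_right,
      ← mul_sub, ih fun j hj => h j (hj.trans k.lt_succ_self)]
    ring

lemma eq_of_forall_digit_eq (hu : u ∈ Ico (0 : ℝ) 1) (hv : v ∈ Ico (0 : ℝ) 1)
    (h : ∀ k, S.digit u k = S.digit v k) : u = v := by
  by_contra hne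
  have hpos : 0 < |u - v| := abs_pos.2 (sub_ne_zero.2 hne)
  obtain ⟨k, hk⟩ := pow_unbounded_of_one_lt |u - v|⁻¹ one_lt_two
  have hlt := S.abs_tail_sub_lt_one hu hv k
  rw [S.tail_sub_tail fun j _ => h j, abs_mul, abs_of_pos (one_pos.trans_le
    (S.one_le_numIntervals k))] at hlt
  rw [inv_lt_iff_one_lt_mul₀ hpos] at hk
  exact (hk.trans_le (by gcongr; exact S.two_pow_le_numIntervals k)).not_gt hlt

lemma gap_mul_digit_sub_le (hu : u ∈ Ico (0 : ℝ) 1) (hv : v ∈ Ico (0 : ℝ) 1)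
    (h : ∀ j < k, S.digit u j = S.digit v j) (hlt : S.digit u k < S.digit v k) :
    (S.step k).gap * (S.digit v k - S.digit u k) ≤ S.limitPoint v - S.limitPoint u := by
  have hleft := (S.left_succ_spec hv k).1.trans (S.limitPoint_mem_Icc hv (k + 1)).1
  have hright := (S.limitPoint_mem_Icc hu (k + 1)).2.trans (S.left_succ_spec hu k).2.1
  have hdigit : (S.digit u k : ℝ) + 1 ≤ S.digit v k := by exact_mod_cast hlt
  have := S.gap_pos k
  rw [slot] at hleft hright
  rw [S.left_congr h] at hright
  nlinarith

lemma numIntervals_mul_abs_sub_le (hu : u ∈ Ico (0 : ℝ) 1) (hv : v ∈ Ico (0 : ℝ) 1)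
    (h : ∀ j < k, S.digit u j = S.digit v j) (hlt : S.digit u k < S.digit v k) :
    S.numIntervals (k + 1) * |u - v| ≤ 2 * (S.digit v k - S.digit u k) := by
  have hdigit : (S.digit u k : ℝ) + 1 ≤ S.digit v k := by exact_mod_cast hlt
  have htail := S.abs_tail_sub_lt_one hu hv (k + 1)
  have heq : S.numIntervals (k + 1) * (u - v) =
      S.tail u (k + 1) - S.tail v (k + 1) - (S.digit v k - S.digit u k) := by
    rw [numIntervals_succ, tail_succ, tail_succ]
    linear_combination (-(S.step k).num : ℝ) * S.tail_sub_tail h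
  rw [← abs_of_pos (one_pos.trans_le (S.one_le_numIntervals (k + 1))), ← abs_mul, heq, abs_le]
  rw [abs_lt] at htail
  constructor <;> linarith

lemma le_numIntervals_mul_rpow (hs0 : 0 ≤ s) (hs1 : s ≤ 1) {Δ : ℝ} (hΔ0 : 0 < Δ)
    (hΔ : Δ ≤ (S.step k).num) :
    Δ ≤ S.numIntervals (k + 1) * (4 * ((S.step k).gap * Δ) ^ s) := by
  have hM : (0 : ℝ) < (S.step k).num := hΔ0.trans_le hΔ
  have hgap := S.gap_pos k
  have := one_pos.trans_le (S.one_le_numIntervals k)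
  have hlen := (S.step k).le_four_mul_gap_mul_num
  have hsucc := S.numIntervals_succ k
  set M := ((S.step k).num : ℝ)
  have hratio : Δ / M ≤ (Δ / M) ^ s :=
    Real.self_le_rpow_of_le_one (by positivity) ((div_le_one hM).2 hΔ) hs1
  have hmass : 1 ≤ S.numIntervals k * (4 * (S.step k).gap * M) ^ s :=
    (S.one_le_numIntervals_mul_len_rpow k).trans (by
      gcongr
      exact (S.len_pos k).le)
  have hfour : (4 : ℝ) ^ s ≤ 4 := Real.rpow_le_self_of_one_le (by norm_num) hs1
  calc Δ = M * (Δ / M * 1) := by field_simp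
    _ ≤ M * ((Δ / M) ^ s * (S.numIntervals k * (4 * (S.step k).gap * M) ^ s)) := by gcongr
    _ = S.numIntervals (k + 1) * ((Δ / M) * (4 * (S.step k).gap * M)) ^ s := by
      rw [hsucc, Real.mul_rpow (x := Δ / M) (by positivity) (by positivity)]
      ring
    _ = S.numIntervals (k + 1) * (4 ^ s * ((S.step k).gap * Δ) ^ s) := by
      rw [← Real.mul_rpow (by positivity) (by positivity)]
      congr 2
      field_simp
    _ ≤ S.numIntervals (k + 1) * (4 * ((S.step k).gap * Δ) ^ s) := by
      rw [hsucc]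
      gcongr

theorem abs_sub_le_mul_abs_limitPoint_sub_rpow (hs0 : 0 ≤ s) (hs1 : s ≤ 1)
    (hu : u ∈ Ico (0 : ℝ) 1) (hv : v ∈ Ico (0 : ℝ) 1) :
    |u - v| ≤ 8 * |S.limitPoint u - S.limitPoint v| ^ s := by
  classical
  by_cases hall : ∀ k, S.digit u k = S.digit v k
  · rw [S.eq_of_forall_digit_eq hu hv hall, sub_self, abs_zero]
    positivity
  obtain ⟨k, hk, hprefix⟩ :
      ∃ k, S.digit u k ≠ S.digit v k ∧ ∀ j < k, S.digit u j = S.digit v j := by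
    rw [not_forall] at hall
    exact ⟨Nat.find hall, Nat.find_spec hall, fun j hj => not_not.1 (Nat.find_min hall hj)⟩
  wlog hlt : S.digit u k < S.digit v k generalizing u v
  · rw [abs_sub_comm, abs_sub_comm (S.limitPoint u)]
    exact this hv hu (mt (fun h j => (h j).symm) hall) hk.symm (fun j hj => (hprefix j hj).symm)
      (hk.lt_or_gt.resolve_left hlt)
  set Δ : ℝ := S.digit v k - S.digit u k
  have hΔ : 0 < Δ := sub_pos.2 (by exact_mod_cast hlt)
  have hΔnum : Δ ≤ (S.step k).num := by
    linarith [S.digit_nonneg hu k, S.digit_add_one_le_num hv k]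
  have hgap := S.gap_pos k
  refine le_of_mul_le_mul_left ?_ (one_pos.trans_le (S.one_le_numIntervals (k + 1)))
  calc S.numIntervals (k + 1) * |u - v| ≤ 2 * Δ := S.numIntervals_mul_abs_sub_le hu hv hprefix hlt
    _ ≤ 2 * (S.numIntervals (k + 1) * (4 * ((S.step k).gap * Δ) ^ s)) := by
      gcongr
      exact S.le_numIntervals_mul_rpow hs0 hs1 hΔ hΔnum
    _ = S.numIntervals (k + 1) * (8 * ((S.step k).gap * Δ) ^ s) := by ring
    _ ≤ S.numIntervals (k + 1) * (8 * |S.limitPoint u - S.limitPoint v| ^ s) := by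
      have := S.one_le_numIntervals (k + 1)
      gcongr
      rw [abs_sub_comm]
      exact (S.gap_mul_digit_sub_le hu hv hprefix hlt).trans (le_abs_self _)

end CantorScheme

section Parametrization

variable {β : ℝ}

lemma eventually_exists_add_two_mul_inv_pow_le (hβ : 1 < β) {c : ℝ} (hc0 : 0 ≤ c)
    (hc : c < Real.log β) :
    ∀ᶠ n : ℕ in atTop, ∃ k : ℕ, (k + 2) * (β ^ n)⁻¹ ≤ (β ^ k)⁻¹ ∧
      (β ^ k)⁻¹ ≤ Real.exp (-(n * c)) := by
  have hβ0 : 0 < β := zero_lt_one.trans hβ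
  have hL : 0 < Real.log β := Real.log_pos hβ
  set L := Real.log β
  have hexp : ∀ᶠ x : ℝ in atTop, x ≤ (4 * Real.exp L)⁻¹ * Real.exp ((L - c) * x) := by
    filter_upwards [(isLittleO_pow_exp_pos_mul_atTop 1 (sub_pos.2 hc)).bound
      (show 0 < (4 * Real.exp L)⁻¹ by positivity)] with x hx
    rw [pow_one, Real.norm_of_nonneg (Real.exp_nonneg _)] at hx
    exact (le_abs_self x).trans hx
  filter_upwards [tendsto_natCast_atTop_atTop.eventually hexp, eventually_ge_atTop 1]
    with n hn hn1
  have hn1' : (1 : ℝ) ≤ n := by exact_mod_cast hn1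
  refine ⟨⌈n * c / L⌉₊, ?_, ?_⟩
  · have hceil : (⌈n * c / L⌉₊ : ℝ) < n * c / L + 1 := Nat.ceil_lt_add_one (by positivity)
    have hle_n : n * c / L ≤ n := by
      rw [div_le_iff₀ hL]
      gcongr
    have hceilL : ⌈n * c / L⌉₊ * L ≤ n * c + L := by
      calc ⌈n * c / L⌉₊ * L ≤ (n * c / L + 1) * L := by gcongr
        _ = n * c + L := by rw [add_mul, div_mul_cancel₀ _ hL.ne', one_mul]
    rw [inv_pow_eq_exp_neg hβ0, inv_pow_eq_exp_neg hβ0]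
    calc (⌈n * c / L⌉₊ + 2) * Real.exp (-(n * L)) ≤ 4 * n * Real.exp (-(n * L)) := by
          gcongr
          linarith
      _ ≤ 4 * ((4 * Real.exp L)⁻¹ * Real.exp ((L - c) * n)) * Real.exp (-(n * L)) := by gcongr
      _ = Real.exp (-(n * c + L)) := by
        rw [mul_inv, mul_assoc 4⁻¹, mul_inv_cancel_left₀ four_ne_zero, ← Real.exp_neg,
          ← Real.exp_add, ← Real.exp_add]
        ring_nf
      _ ≤ Real.exp (-(⌈n * c / L⌉₊ * L)) := by gcongr
  · rw [inv_pow_eq_exp_neg hβ0, Real.exp_le_exp, neg_le_neg_iff, ← div_le_iff₀ hL]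
    exact Nat.le_ceil _

lemma eventually_mul_exp_neg_le {c s T ρ : ℝ} (hρ : 0 < ρ) (h : s * T < c) (C : ℝ) :
    ∀ᶠ n : ℕ in atTop, C * Real.exp (-(n * c)) ≤ ρ * (Real.exp (-(n * T)) / 2) ^ s := by
  have hlarge : Tendsto (fun n : ℕ => Real.exp (n * (c - s * T))) atTop atTop :=
    Real.tendsto_exp_atTop.comp (tendsto_natCast_atTop_atTop.atTop_mul_const (sub_pos.2 h))
  filter_upwards [hlarge.eventually_ge_atTop (C * 2 ^ s / ρ)] with n hn
  rw [div_le_iff₀' hρ] at hn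
  rw [Real.div_rpow (Real.exp_nonneg _) zero_le_two, ← Real.exp_mul, mul_div_assoc',
    le_div_iff₀ (by positivity)]
  calc C * Real.exp (-(n * c)) * 2 ^ s = C * 2 ^ s * Real.exp (-(n * c)) := by ring
    _ ≤ ρ * Real.exp (n * (c - s * T)) * Real.exp (-(n * c)) := by gcongr
    _ = ρ * Real.exp (-(n * T) * s) := by
      rw [mul_assoc, ← Real.exp_add]
      ring_nf

lemma eventually_nonempty_cantorStep_nearReturn (hβ : 1 < β) {τ s : ℝ} (hτ : 0 ≤ τ) (hs0 : 0 ≤ s)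
    (hs : s * (τ + Real.log β) < Real.log β) {ρ : ℝ} (hρ : 0 < ρ) :
    ∀ᶠ n : ℕ in atTop, Nonempty (CantorStep s (nearReturn β n (Real.exp (-(n * τ)) / 2)) ρ
      (Real.exp (-(n * τ)) / 2 * (β ^ n)⁻¹)) := by
  have hL : 0 < Real.log β := Real.log_pos hβ
  obtain ⟨c, hsc, hcL⟩ := exists_between hs
  filter_upwards [eventually_exists_add_two_mul_inv_pow_le hβ (le_trans (by positivity) hsc.le) hcL,
    eventually_mul_exp_neg_le hρ hsc 8, eventually_ne_atTop 0] with n ⟨k, hk, hkc⟩ hn hn0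
  have hδ : Real.exp (-(n * τ)) ≤ 1 := Real.exp_le_one_iff.2 (neg_nonpos.2 (by positivity))
  have hβn : (β ^ n)⁻¹ ≤ 1 := inv_le_one_of_one_le₀ (one_le_pow₀ hβ.le)
  have hβn0 : 0 < (β ^ n)⁻¹ := by positivity
  have hβk : (β ^ n)⁻¹ ≤ (β ^ k)⁻¹ :=
    (le_mul_of_one_le_left hβn0.le (by linarith [k.cast_nonneg (α := ℝ)])).trans hk
  have hρ'_le : Real.exp (-(n * τ)) / 2 * (β ^ n)⁻¹ ≤ 1 * (β ^ n)⁻¹ := by gcongr; linarith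
  have hρ'_eq : Real.exp (-(n * (τ + Real.log β))) / 2 =
      Real.exp (-(n * τ)) / 2 * (β ^ n)⁻¹ := by
    rw [inv_pow_eq_exp_neg (zero_lt_one.trans hβ), div_mul_eq_mul_div, ← Real.exp_add]
    ring_nf
  have hmass : 4 * (2 * (β ^ k)⁻¹) ≤ ρ * (Real.exp (-(n * τ)) / 2 * (β ^ n)⁻¹) ^ s := by
    rw [← hρ'_eq]
    linarith
  have hrpow : (Real.exp (-(n * τ)) / 2 * (β ^ n)⁻¹) ^ s ≤ 1 :=
    Real.rpow_le_one (by positivity) (by linarith) hs0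
  exact CantorStep.nonempty (by positivity) (by linarith)
    (hmass.trans (mul_le_of_le_one_right hρ.le hrpow)) hmass fun a ha0 ha1 =>
      exists_Icc_subset_nearReturn hβ hn0 hk (by positivity) (by linarith) ha0 ha1

theorem exists_forall_frequently_mem_nearReturn (hβ : 1 < β) {τ s : ℝ} (hτ : 0 ≤ τ) (hs0 : 0 ≤ s)
    (hs : s * (τ + Real.log β) < Real.log β) {p : ℕ → Prop} (hp : ∃ᶠ n in atTop, p n) :
    ∃ φ : ℝ → ℝ, (∀ u ∈ Ico (0 : ℝ) 1,
        ∃ᶠ n : ℕ in atTop, p n ∧ φ u ∈ nearReturn β n (Real.exp (-(n * τ)) / 2)) ∧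
      ∀ u ∈ Ico (0 : ℝ) 1, ∀ v ∈ Ico (0 : ℝ) 1, |u - v| ≤ 8 * |φ u - φ v| ^ s := by
  have hL : 0 < Real.log β := Real.log_pos hβ
  have hs1 : s ≤ 1 := by
    by_contra! hlt
    nlinarith
  obtain ⟨S⟩ : Nonempty (CantorScheme s
      fun n => {x | p n ∧ x ∈ nearReturn β n (Real.exp (-(n * τ)) / 2)}) := by
    refine CantorScheme.nonempty fun ρ hρ => (hp.and_eventually
      (eventually_nonempty_cantorStep_nearReturn hβ hτ hs0 hs hρ)).mono fun n ⟨hpn, hstep⟩ => ?_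
    simp only [hpn, true_and]
    exact ⟨_, by positivity, hstep⟩
  exact ⟨S.limitPoint, fun u hu => S.frequently_limitPoint_mem hu,
    fun u hu v hv => S.abs_sub_le_mul_abs_limitPoint_sub_rpow hs0 hs1 hu hv⟩

end Parametrization

section MassDistribution

open Metric (ediam)

lemma le_dimH_of_forall_le_mul_ediam_rpow {X : Type*} [EMetricSpace X] {ν : OuterMeasure X}
    {A : Set X} {C s : ℝ≥0} (hν : ∀ t, ν t ≤ C * ediam t ^ (s : ℝ)) (hA : ν A ≠ 0) :
    s ≤ dimH A := by
  borelize X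
  have hC : (C : ℝ≥0∞) ≠ 0 := by
    rintro hC
    exact hA (nonpos_iff_eq_zero.1 (by simpa only [hC, zero_mul] using hν A))
  have hle : (C : ℝ≥0∞)⁻¹ • ν ≤ OuterMeasure.mkMetric fun x => x ^ (s : ℝ) :=
    OuterMeasure.le_mkMetric _ _ 1 one_pos fun t _ =>
      (ENNReal.inv_mul_le_iff hC ENNReal.coe_ne_top).2 (hν t)
  refine le_dimH_of_hausdorffMeasure_ne_zero fun hzero => ?_
  rw [Measure.hausdorffMeasure, ← OuterMeasure.coe_mkMetric] at hzero
  have hνA : (C : ℝ≥0∞)⁻¹ * ν A = 0 := nonpos_iff_eq_zero.1 ((hle A).trans_eq hzero)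
  rw [mul_eq_zero, ENNReal.inv_eq_zero] at hνA
  exact hνA.elim ENNReal.coe_ne_top hA

variable {ι : Type*} [Fintype ι] [DecidableEq ι] {φ : ℝ → ℝ} {k : ι} {C s : ℝ≥0}

lemma volume_inter_preimage_update_le {S : Set ℝ}
    (hφ : ∀ u ∈ S, ∀ v ∈ S, |u - v| ≤ C * |φ u - φ v| ^ (s : ℝ)) (t : Set (ι → ℝ)) :
    volume ((fun w => Function.update w k (φ (w k))) ⁻¹' t ∩ Set.univ.pi fun _ => S) ≤
      C * ediam t ^ ((Fintype.card ι - 1 : ℕ) + s : ℝ) := by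
  set Φ : (ι → ℝ) → ι → ℝ := fun w => Function.update w k (φ (w k))
  set B := Φ ⁻¹' t ∩ Set.univ.pi fun _ => S
  have hcoord {w w' : ι → ℝ} (hw : w ∈ B) (hw' : w' ∈ B) (i : ι) :
      edist (Φ w i) (Φ w' i) ≤ ediam t :=
    (edist_le_pi_edist _ _ i).trans (Metric.edist_le_ediam_of_mem hw.1 hw'.1)
  have hne : ∀ i ∈ Finset.univ.erase k, ediam (Function.eval i '' B) ≤ ediam t := by
    refine fun i hi => Metric.ediam_le ?_
    rintro _ ⟨w, hw, rfl⟩ _ ⟨w', hw', rfl⟩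
    simpa only [Φ, Function.update_of_ne (Finset.ne_of_mem_erase hi)] using hcoord hw hw' i
  have hk : ediam (Function.eval k '' B) ≤ C * ediam t ^ (s : ℝ) := by
    refine Metric.ediam_le ?_
    rintro _ ⟨w, hw, rfl⟩ _ ⟨w', hw', rfl⟩
    have hdist : edist (φ (w k)) (φ (w' k)) ≤ ediam t := by
      simpa only [Φ, Function.update_self] using hcoord hw hw' k
    calc edist (w k) (w' k) = ENNReal.ofReal |w k - w' k| := by rw [edist_dist, Real.dist_eq]
      _ ≤ ENNReal.ofReal (C * |φ (w k) - φ (w' k)| ^ (s : ℝ)) :=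
          ENNReal.ofReal_le_ofReal (hφ _ (hw.2 k trivial) _ (hw'.2 k trivial))
      _ = C * edist (φ (w k)) (φ (w' k)) ^ (s : ℝ) := by
          rw [ENNReal.ofReal_mul C.coe_nonneg, ENNReal.ofReal_coe_nnreal,
            ← ENNReal.ofReal_rpow_of_nonneg (abs_nonneg _) s.coe_nonneg, ← Real.dist_eq,
            ← edist_dist]
      _ ≤ C * ediam t ^ (s : ℝ) := by gcongr
  calc volume B ≤ ∏ i, ediam (Function.eval i '' B) := Real.volume_pi_le_prod_diam B
    _ = ediam (Function.eval k '' B) * ∏ i ∈ Finset.univ.erase k, ediam (Function.eval i '' B) :=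
        (Finset.mul_prod_erase _ _ (Finset.mem_univ k)).symm
    _ ≤ C * ediam t ^ (s : ℝ) * ediam t ^ (Finset.univ.erase k).card :=
        mul_le_mul' hk (Finset.prod_le_pow_card _ _ _ hne)
    _ = C * ediam t ^ ((Fintype.card ι - 1 : ℕ) + s : ℝ) := by
        rw [Finset.card_erase_of_mem (Finset.mem_univ k), Finset.card_univ, mul_assoc,
          ← ENNReal.rpow_natCast, ← ENNReal.rpow_add_of_nonneg _ _ s.coe_nonneg (Nat.cast_nonneg _),
          add_comm]

theorem card_sub_one_add_le_dimH {S : Set ℝ} (hS : MeasurableSet S) (hS0 : volume S ≠ 0)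
    (hφ : ∀ u ∈ S, ∀ v ∈ S, |u - v| ≤ C * |φ u - φ v| ^ (s : ℝ)) {A : Set (ι → ℝ)}
    (hA : MapsTo (fun w => Function.update w k (φ (w k))) (Set.univ.pi fun _ => S) A) :
    (Fintype.card ι - 1 : ℕ) + (s : ℝ≥0∞) ≤ dimH A := by
  set Q : Set (ι → ℝ) := Set.univ.pi fun _ => S
  have hQ : MeasurableSet Q := MeasurableSet.univ_pi fun _ => hS
  have hν (t : Set (ι → ℝ)) : OuterMeasure.map (fun w => Function.update w k (φ (w k)))
      (volume.restrict Q).toOuterMeasure t = volume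
        ((fun w => Function.update w k (φ (w k))) ⁻¹' t ∩ Q) := by
    rw [OuterMeasure.map_apply, Measure.coe_toOuterMeasure, Measure.restrict_apply' hQ]
  have hvol : volume Q ≠ 0 := by
    rw [volume_pi_pi]
    exact Finset.prod_ne_zero_iff.2 fun _ _ => hS0
  refine le_dimH_of_forall_le_mul_ediam_rpow (C := C)
    (s := (Fintype.card ι - 1 : ℕ) + s) (fun t => (hν t).trans_le ?_) ((hν A).trans_ne ?_)
  · exact_mod_cast volume_inter_preimage_update_le hφ t
  · rwa [Set.inter_eq_self_of_subset_right hA.subset_preimage]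

end MassDistribution

section LowerBound

variable {ι : Type*} [Fintype ι] {β : ι → ℝ} {ψ : ℕ → ℝ}

lemma update_mem_multShrinkingTarget [DecidableEq ι] {w : ι → ℝ} (hw : ∀ i, w i ∈ Ico (0 : ℝ) 1)
    {k : ι} {x : ℝ} (hx : x ∈ Ico (0 : ℝ) 1)
    (hfreq : ∃ᶠ n in atTop, tdist ((betaT (β k))^[n] x) x < ψ n) :
    Function.update w k x ∈ multShrinkingTarget β ψ := by
  refine ⟨fun i => ?_, hfreq.mono fun n hn => lt_of_le_of_lt ?_ hn⟩
  · rcases eq_or_ne i k with rfl | hi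
    · rwa [Function.update_self]
    · rw [Function.update_of_ne hi]
      exact hw i
  · rw [← Finset.mul_prod_erase _ _ (Finset.mem_univ k), Function.update_self]
    exact mul_le_of_le_one_right (tdist_nonneg _ _)
      (Finset.prod_le_one (fun i _ => tdist_nonneg _ _) fun i _ => tdist_le_one _ _)

lemma card_sub_one_le_dimH_multShrinkingTarget [Nonempty ι] (hψ : ∀ n, 0 < ψ n) :
    (Fintype.card ι - 1 : ℕ) ≤ dimH (multShrinkingTarget β ψ) := by
  classical
  have k : ι := Classical.arbitrary ι
  have hzero (n : ℕ) : tdist ((betaT (β k))^[n] 0) 0 < ψ n := by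
    rw [iterate_betaT_zero]
    exact (tdist_le_abs_sub 0 0).trans_lt (by simpa using hψ n)
  simpa using card_sub_one_add_le_dimH (φ := fun _ => 0) (C := 1) (s := 0) (k := k)
    (measurableSet_Ico (a := (0 : ℝ)) (b := 1)) (by simp)
    (fun u hu v hv => by simpa using abs_sub_le_of_le_of_le hu.1 hu.2.le hv.1 hv.2.le)
    fun w hw => update_mem_multShrinkingTarget (fun i => hw i trivial)
      (Set.left_mem_Ico.2 one_pos) (Frequently.of_forall hzero)

lemma card_sub_one_add_le_dimH_multShrinkingTarget {k : ι} (hk : 1 < β k) {T s : ℝ≥0}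
    (hψ : ∃ᶠ n : ℕ in atTop, Real.exp (-(n * T)) ≤ ψ n)
    (hs : s * (T + Real.log (β k)) < Real.log (β k)) :
    (Fintype.card ι - 1 : ℕ) + (s : ℝ≥0∞) ≤ dimH (multShrinkingTarget β ψ) := by
  classical
  obtain ⟨φ, hφ, hholder⟩ :=
    exists_forall_frequently_mem_nearReturn hk T.coe_nonneg s.coe_nonneg hs hψ
  refine card_sub_one_add_le_dimH (C := 8) (k := k) measurableSet_Ico (by simp) hholder
    fun w hw => ?_
  have hreturn := hφ (w k) (hw k trivial)
  obtain ⟨_, -, hmem, -⟩ := hreturn.exists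
  refine update_mem_multShrinkingTarget (fun i => hw i trivial) hmem
    (hreturn.mono fun n ⟨hn, _, hdist⟩ => ?_)
  exact (hdist.trans_lt (half_lt_self (Real.exp_pos _))).trans_le hn

lemma exists_gt_of_lt_div_add {L s : ℝ≥0} {τ : ℝ≥0∞} (hτ : τ ≠ ∞) (h : s < L / (τ + L)) :
    ∃ T : ℝ≥0, τ < T ∧ s * (T + L) < L := by
  have : NeBot (𝓝[>] τ) := nhdsGT_neBot_of_exists_gt ⟨∞, hτ.lt_top⟩
  have hcont : Continuous fun T : ℝ≥0∞ => s * (T + L) :=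
    (ENNReal.continuous_const_mul ENNReal.coe_ne_top).comp (continuous_add_const _)
  obtain ⟨T, hT, hτT, hTtop⟩ := (((hcont.tendsto τ).eventually_lt_const
    (ENNReal.mul_lt_of_lt_div h)).filter_mono nhdsWithin_le_nhds |>.and
      (Ioo_mem_nhdsGT hτ.lt_top)).exists
  lift T to ℝ≥0 using hTtop.ne
  exact ⟨T, hτT, by exact_mod_cast hT⟩

theorem le_dimH_multShrinkingTarget {k : ι} (hk : 1 < β k) (hψ : ∀ n, 0 < ψ n) :
    (Fintype.card ι - 1 : ℕ) +
        ENNReal.ofReal (Real.log (β k)) / (decayRate ψ + ENNReal.ofReal (Real.log (β k))) ≤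
      dimH (multShrinkingTarget β ψ) := by
  have : Nonempty ι := ⟨k⟩
  have hcard : (Fintype.card ι - 1 : ℕ) ≤ dimH (multShrinkingTarget β ψ) :=
    card_sub_one_le_dimH_multShrinkingTarget hψ
  rcases eq_or_ne (decayRate ψ) ∞ with htop | htop
  · simpa [htop] using hcard
  refine add_le_of_le_tsub_left_of_le hcard (ENNReal.le_of_forall_nnreal_lt fun s hs => ?_)
  refine ENNReal.le_sub_of_add_le_left (ENNReal.natCast_ne_top _) ?_
  obtain ⟨T, hτT, hT⟩ := exists_gt_of_lt_div_add htop hs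
  refine card_sub_one_add_le_dimH_multShrinkingTarget hk (T := T) ?_ ?_
  · refine ((frequently_lt_of_liminf_lt (by isBoundedDefault) hτT).and_eventually
      (eventually_ne_atTop 0)).mono fun n ⟨hn, hn0⟩ => ?_
    exact (ofReal_neg_log_div_le_iff (hψ n) hn0 T).1 hn.le
  · rw [← Real.coe_toNNReal _ (Real.log_pos hk).le]
    exact_mod_cast hT

end LowerBound

theorem dimH_multiplicative_shrinking_target_general {ι : Type*} [Fintype ι] {β : ι → ℝ}
    (hβ : ∀ i, 1 < β i) {k : ι} (hk : ∀ i, β i ≤ β k) {ψ : ℕ → ℝ} (hψ : ∀ n, 0 < ψ n) :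
    dimH (multShrinkingTarget β ψ) = ((Fintype.card ι : ℝ≥0∞) - 1) +
      ENNReal.ofReal (Real.log (β k)) / (decayRate ψ + ENNReal.ofReal (Real.log (β k))) := by
  have : Nonempty ι := ⟨k⟩
  have hlog : 0 < Real.log (β k) := Real.log_pos (hβ k)
  have hcard : ((Fintype.card ι - 1 : ℕ) : ℝ≥0∞) = Fintype.card ι - 1 := by
    rw [ENNReal.natCast_sub, Nat.cast_one]
  rw [← hcard]
  refine le_antisymm (dimH_multShrinkingTarget_le hβ hψ (Real.toNNReal_pos.2 hlog) fun i => ?_)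
    (le_dimH_multShrinkingTarget (hβ k) hψ)
  rw [Real.coe_toNNReal _ hlog.le]
  exact Real.log_le_log (zero_lt_one.trans (hβ i)) (hk i)

/-- **Theorem (modified shrinking target, multiplicative form).**
For `1 < β_1 ≤ ⋯ ≤ β_d` and `ψ : ℕ → (0,1]`, the Hausdorff dimension of
`H_d(T,ψ) = {x ∈ 𝕋^d : ∏_i |T_{β_i}^n(x_i) - x_i| < ψ(n) for infinitely many n}`
is `d - 1 + log β_d / (τ + log β_d)`, where `τ = liminf (-log ψ(n))/n`
(the fraction being `0` when `τ = ∞`, as encoded by `ℝ≥0∞` arithmetic). -/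
theorem dimH_multiplicative_shrinking_target
    (d : ℕ) (hd : 1 ≤ d) (β : Fin d → ℝ) (hβ : ∀ i, 1 < β i) (hmono : Monotone β)
    (ψ : ℕ → ℝ) (hψ : ∀ n, ψ n ∈ Set.Ioc (0 : ℝ) 1) :
    dimH {x : Fin d → ℝ | (∀ i, x i ∈ Set.Ico (0 : ℝ) 1) ∧
        (∃ᶠ n in atTop, (∏ i, tdist ((betaT (β i))^[n] (x i)) (x i)) < ψ n)} =
      ((d : ℝ≥0∞) - 1) +
        ENNReal.ofReal (Real.log (β ⟨d - 1, by omega⟩)) /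
          (Filter.liminf (fun n : ℕ => ENNReal.ofReal (-Real.log (ψ n) / n)) atTop +
            ENNReal.ofReal (Real.log (β ⟨d - 1, by omega⟩))) := by
  simpa only [Fintype.card_fin, multShrinkingTarget, decayRate] using
    dimH_multiplicative_shrinking_target_general hβ
      (fun i => hmono (Fin.mk_le_mk.2 (Nat.le_sub_one_of_lt i.2))) fun n => (hψ n).1
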